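/- arXiv:1505.01250 — 2 statements merged into one kernel-verified Lean document; each statement's English description precedes it below -/
import Mathlib

section
/- Principal specialization: assume the parameters t, t_0 are real with 0 < t < 1 and 0 < t_0 < 1, and that all denominators occurring in c_λ and in C_λ(w·iρ) (w ∈ W_n) are nonzero, where ρ = Σ_{1≤j≤n} (log(t_0) + (n−j) log(t)) e_j ∈ ℝ^n. Then for every λ ∈ Λ one has P_λ(iρ) = 1, i.e., the hyperoctahedral Hall–Littlewood function has unit principal specialization value. -/
open Finset Complex MeasureTheory

noncomputable section

namespace QB

/-- The partition predicate: `lam` is weakly decreasing with nonnegative parts. -/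
def IsPart (n : ℕ) (lam : Fin n → ℤ) : Prop :=
  (∀ i j : Fin n, i ≤ j → lam j ≤ lam i) ∧ ∀ i, 0 ≤ lam i

instance (n : ℕ) (lam : Fin n → ℤ) : Decidable (IsPart n lam) := by
  unfold IsPart; infer_instance

/-- The cone `Λ` of partitions with at most `n` parts. -/
def Lam (n : ℕ) := {lam : Fin n → ℤ // IsPart n lam}

/-- `λ + e_{J+} - e_{J-}`. -/
def shift (n : ℕ) (lam : Fin n → ℤ) (Jp Jm : Finset (Fin n)) : Fin n → ℤ :=
  fun i => lam i + (if i ∈ Jp then 1 else 0) - (if i ∈ Jm then 1 else 0)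

/-- `ε_j(J+, J-)`. -/
def eps (n : ℕ) (Jp Jm : Finset (Fin n)) (i : Fin n) : ℤ :=
  if i ∈ Jp then 1 else if i ∈ Jm then -1 else 0

/-- the exponent `n - j` in paper indexing (`j = (i : ℕ) + 1`). -/
def en (n : ℕ) (i : Fin n) : ℤ := (n : ℤ) - (i : ℤ) - 1

/-- `t^{n-j}` in paper indexing. -/
def tn (n : ℕ) (t : ℂ) (i : Fin n) : ℂ := t ^ en n i

/-- the ratio `(1-t^{1+k-j})/(1-t^{k-j})` in paper indexing. -/
def rat (n : ℕ) (t : ℂ) (j k : Fin n) : ℂ :=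
  (1 - t ^ ((k : ℤ) - (j : ℤ) + 1)) / (1 - t ^ ((k : ℤ) - (j : ℤ)))

/-- `∏_{1 ≤ j < k ≤ n, λ_j = λ_k, ε_j > ε_k} (1-t^{1+k-j})/(1-t^{k-j})`. -/
def pairProd (n : ℕ) (t : ℂ) (lam : Fin n → ℤ) (Jp Jm : Finset (Fin n)) : ℂ :=
  ∏ j : Fin n, ∏ k : Fin n,
    if j < k ∧ lam j = lam k ∧ eps n Jp Jm j > eps n Jp Jm k then rat n t j k else 1

/-- the coefficient `W_{J+,J-}(λ)` (three-parameter case). -/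
def W3 (n : ℕ) (t t0 t1 t2 : ℂ) (lam : Fin n → ℤ) (Jp Jm : Finset (Fin n)) : ℂ :=
  (∏ j ∈ Jp, if lam j = 0 then
      (1 - t0 * t1 * tn n t j) * (1 - t0 * t2 * tn n t j) * (1 - t1 * t2 * tn n t j) else 1)
  * pairProd n t lam Jp Jm

/-- the coefficient `U_{K,m}(λ)` (three-parameter case). -/
def U3 (n : ℕ) (t t0 t1 t2 : ℂ) (K : Finset (Fin n)) (m : ℕ) (lam : Fin n → ℤ) : ℂ :=
  (-1 : ℂ) ^ m *
  ∑ p ∈ (univ : Finset (Finset (Fin n) × Finset (Fin n))).filter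
      (fun p => p.1 ⊆ K ∧ p.2 ⊆ K ∧ Disjoint p.1 p.2 ∧ p.1.card + p.2.card = m),
    (∏ j ∈ p.1, if lam j = 0 then (1 - t0 * t1 * tn n t j) * (1 - t0 * t2 * tn n t j) else 1) *
    (∏ j ∈ p.2, if lam j = 1 then 1 - t1 * t2 * tn n t j else 1) *
    (∏ j ∈ K, ∏ k ∈ K,
        if lam j = lam k ∧ eps n p.1 p.2 j > eps n p.1 p.2 k then rat n t j k else 1) *
    (∏ j ∈ p.2, ∏ k ∈ p.1, if lam j = lam k + 1 then rat n t j k else 1) *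
    (∏ j ∈ K, t0 ^ (-(eps n p.1 p.2 j))) *
    (∏ j ∈ K, ∏ k ∈ K,
        if j < k ∧ eps n p.1 p.2 j ≠ eps n p.1 p.2 k ∧ eps n p.1 p.2 k = 0
        then t ^ (-(eps n p.1 p.2 j)) else 1) *
    (∏ j ∈ K, ∏ k ∈ K,
        if j < k ∧ lam j = lam k ∧ eps n p.1 p.2 k - eps n p.1 p.2 j = 1 then t⁻¹ else 1)

/-- the difference operator `H_l` (three-parameter case). -/
def H3 (n : ℕ) (t t0 t1 t2 : ℂ) (l : ℕ) (f : Lam n → ℂ) : Lam n → ℂ := fun lam =>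
  ∑ p ∈ (univ : Finset (Finset (Fin n) × Finset (Fin n))).filter
      (fun p => Disjoint p.1 p.2 ∧ p.1.card + p.2.card ≤ l),
    if h : IsPart n (shift n lam.1 p.1 p.2) then
      U3 n t t0 t1 t2 (p.1ᶜ ∩ p.2ᶜ) (l - (p.1.card + p.2.card)) lam.1 *
      W3 n t t0 t1 t2 lam.1 p.1 p.2 * f ⟨_, h⟩
    else 0

/-- the Pieri coefficient `V_{J+,J-}(λ)` (three-parameter case). -/
def V3 (n : ℕ) (t t0 t1 t2 : ℂ) (lam : Fin n → ℤ) (Jp Jm : Finset (Fin n)) : ℂ :=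
  (∏ j ∈ Jp, if lam j = 0 then (1 - t0 * t1 * tn n t j) * (1 - t0 * t2 * tn n t j) else 1) *
  (∏ j ∈ Jm, if lam j = 1 then 1 - t1 * t2 * tn n t j else 1) *
  pairProd n t lam Jp Jm *
  ∏ j : Fin n, t0 ^ (-(eps n Jp Jm j)) * t ^ (-(en n j * eps n Jp Jm j))

/-- the gauge function `h(λ)` (three-parameter case). -/
def h3 (n : ℕ) (t t0 t1 t2 : ℂ) (lam : Fin n → ℤ) : ℂ :=
  ∏ j : Fin n, if 0 < lam j then
    t0 ^ (lam j) * t ^ (en n j * lam j) * (1 - t1 * t2 * tn n t j) else 1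

/-- action of the hyperoctahedral group `W_n = S_n ⋉ {-1,1}^n` on `ξ ∈ ℂ^n`. -/
def act (n : ℕ) (w : Equiv.Perm (Fin n) × (Fin n → Bool)) (xi : Fin n → ℂ) : Fin n → ℂ :=
  fun j => (if w.2 j then -1 else 1) * xi (w.1 j)

/-- the factor `C_λ(ξ)`. -/
def Cf (n : ℕ) (t t0 t1 t2 t3 : ℂ) (lam : Fin n → ℤ) (xi : Fin n → ℂ) : ℂ :=
  (∏ j : Fin n, ∏ k : Fin n, if j < k then
      ((1 - t * exp (I * (xi j - xi k))) * (1 - t * exp (I * (xi j + xi k)))) /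
      ((1 - exp (I * (xi j - xi k))) * (1 - exp (I * (xi j + xi k)))) else 1) *
  ∏ j : Fin n, if 0 < lam j then
      ((1 - t0 * exp (I * xi j)) * (1 - t1 * exp (I * xi j)) *
       (1 - t2 * exp (I * xi j)) * (1 - t3 * exp (I * xi j))) / (1 - exp (2 * I * xi j))
    else 1

/-- the normalization constant `c_λ`. -/
def ccf (n : ℕ) (t t0 t1 t2 t3 : ℂ) (lam : Fin n → ℤ) : ℂ :=
  ∏ j : Fin n,
    (t0 ^ (lam j) * t ^ (en n j * lam j) * (1 - t)) /
    ((1 - t ^ ((j : ℤ) + 1)) * (if lam j = 0 then 1 + tn n t j else 1) *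
     (if lam j = 0 then 1 else
        (1 - t0 * t1 * tn n t j) * (1 - t0 * t2 * tn n t j) * (1 - t0 * t3 * tn n t j)))

/-- the hyperoctahedral Hall–Littlewood function `P_λ(ξ)`. -/
def P (n : ℕ) (t t0 t1 t2 t3 : ℂ) (lam : Fin n → ℤ) (xi : Fin n → ℂ) : ℂ :=
  ccf n t t0 t1 t2 t3 lam *
  ∑ w : Equiv.Perm (Fin n) × (Fin n → Bool),
    Cf n t t0 t1 t2 t3 lam (act n w xi) *
    exp (-I * ∑ j : Fin n, (lam j : ℂ) * act n w xi j)

/-- the symmetric function `E_l(ξ)` (eigenvalue). -/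
def E (n : ℕ) (t t0 : ℂ) (l : ℕ) (xi : Fin n → ℂ) : ℂ :=
  ∑ S ∈ Finset.powersetCard l (univ : Finset (Fin n)),
    if h : S.card = l then
      ∏ k : Fin l,
        (2 * Complex.cos (xi ((S.orderIsoOfFin h k).1)) -
         t0 * t ^ ((((S.orderIsoOfFin h k).1 : ℕ) : ℤ) - (k : ℤ)) -
         t0⁻¹ * t ^ (-((((S.orderIsoOfFin h k).1 : ℕ) : ℤ) - (k : ℤ))))
    else 0

/-- `ξ` is generic: all factors `C_μ(wξ)` are defined (no vanishing denominators). -/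
def Generic (n : ℕ) (xi : Fin n → ℂ) : Prop :=
  ∀ w : Equiv.Perm (Fin n) × (Fin n → Bool),
    (∀ j k : Fin n, j < k →
      1 - exp (I * (act n w xi j - act n w xi k)) ≠ 0 ∧
      1 - exp (I * (act n w xi j + act n w xi k)) ≠ 0) ∧
    ∀ j : Fin n, 1 - exp (2 * I * act n w xi j) ≠ 0

/-- the weight function `Δ(ξ)`. -/
def Dlt (n : ℕ) (t t0 t1 t2 t3 : ℂ) (xi : Fin n → ℂ) : ℂ :=
  (∏ j : Fin n, ∏ k : Fin n, if j < k then
      ((1 - exp (I * (xi j - xi k))) * (1 - exp (I * (xi j + xi k)))) /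
      ((1 - t * exp (I * (xi j - xi k))) * (1 - t * exp (I * (xi j + xi k)))) else 1) *
  ∏ j : Fin n, (1 - exp (2 * I * xi j)) /
    ((1 - t0 * exp (I * xi j)) * (1 - t1 * exp (I * xi j)) *
     (1 - t2 * exp (I * xi j)) * (1 - t3 * exp (I * xi j)))

/-- `m_0(λ)`. -/
def m0c (n : ℕ) (lam : Fin n → ℤ) : ℕ := (univ.filter fun j => lam j = 0).card

/-- `m_1(λ)`. -/
def m1c (n : ℕ) (lam : Fin n → ℤ) : ℕ := (univ.filter fun j => lam j = 1).card

/-- `m_1^+(λ)` relative to `J_+`. -/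
def m1p (n : ℕ) (lam : Fin n → ℤ) (Jp : Finset (Fin n)) : ℕ :=
  (Jp.filter fun j => lam j = 1).card

/-- the Pieri coefficient `V_{J+,J-}(λ)` (four-parameter case). -/
def V4 (n : ℕ) (t t0 t1 t2 t3 : ℂ) (lam : Fin n → ℤ) (Jp Jm : Finset (Fin n)) : ℂ :=
  (∏ j ∈ Jp, if lam j = 0 then
      ((1 - t0*t1*t2*t3 * t ^ (en n j + (m0c n lam : ℤ) + (m1c n lam : ℤ) - (m1p n lam Jp : ℤ))) *
       ((1 - t0 * t1 * tn n t j) * (1 - t0 * t2 * tn n t j) * (1 - t0 * t3 * tn n t j))) /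
      ((1 - t0*t1*t2*t3 * t ^ (2 * en n j)) * (1 - t0*t1*t2*t3 * t ^ (2 * en n j + 1)))
    else 1) *
  (∏ j ∈ Jp, if lam j = 1 then 1 - t0*t1*t2*t3 * t ^ (en n j + (m0c n lam : ℤ)) else 1) *
  (∏ j ∈ Jm, if lam j = 1 then
      ((1 - t0*t1*t2*t3 * t ^ (en n j - 1)) *
       ((1 - t1 * t2 * tn n t j) * (1 - t1 * t3 * tn n t j) * (1 - t2 * t3 * tn n t j))) /
      ((1 - t0*t1*t2*t3 * t ^ (2 * en n j)) * (1 - t0*t1*t2*t3 * t ^ (2 * en n j - 1)))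
    else 1) *
  pairProd n t lam Jp Jm *
  ∏ j : Fin n, t0 ^ (-(eps n Jp Jm j)) * t ^ (-(en n j * eps n Jp Jm j))

/-- the coefficient `U_{K,m}(λ)` (four-parameter case). -/
def U4 (n : ℕ) (t t0 t1 t2 t3 : ℂ) (K : Finset (Fin n)) (m : ℕ) (lam : Fin n → ℤ) : ℂ :=
  (-1 : ℂ) ^ m *
  ∑ p ∈ (univ : Finset (Finset (Fin n) × Finset (Fin n))).filter
      (fun p => p.1 ⊆ K ∧ p.2 ⊆ K ∧ Disjoint p.1 p.2 ∧ p.1.card + p.2.card = m),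
    (∏ j ∈ p.1, if lam j = 0 then
        ((1 - t0 * t1 * tn n t j) * (1 - t0 * t2 * tn n t j) * (1 - t0 * t3 * tn n t j)) /
        (1 - t0*t1*t2*t3 * t ^ (2 * en n j)) else 1) *
    (∏ j ∈ p.1, if lam j = 1 then 1 - t0*t1*t2*t3 * t ^ (en n j) else 1) *
    (∏ j ∈ p.2, if lam j = 1 then
        ((1 - t1 * t2 * tn n t j) * (1 - t1 * t3 * tn n t j) * (1 - t2 * t3 * tn n t j)) /
        (1 - t0*t1*t2*t3 * t ^ (2 * en n j)) else 1) *
    (∏ j ∈ K, ∏ k ∈ K,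
        if j < k ∧ (eps n p.1 p.2 j + eps n p.1 p.2 k = -2 ∨ eps n p.1 p.2 j + eps n p.1 p.2 k = 1 ∨
              eps n p.1 p.2 j + eps n p.1 p.2 k = 2) ∧
           lam j = 1 ∧ lam k = (if eps n p.1 p.2 k = -1 then 1 else 0)
        then (1 - t0*t1*t2*t3 * t ^ (2 * (n : ℤ) + 1 - ((j : ℤ) + 1) - ((k : ℤ) + 1))) /
             (1 - t0*t1*t2*t3 * t ^ (2 * (n : ℤ) - ((j : ℤ) + 1) - ((k : ℤ) + 1))) else 1) *
    (∏ j ∈ p.1 ∪ p.2, ∏ k ∈ K \ p.2,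
        if j < k ∧ (eps n p.1 p.2 k - eps n p.1 p.2 j = 0 ∨ eps n p.1 p.2 k - eps n p.1 p.2 j = 1) ∧
           lam j = (if eps n p.1 p.2 j = -1 then 1 else 0) ∧ lam k = 0
        then (1 - t0*t1*t2*t3 * t ^ (2 * (n : ℤ) - 1 - ((j : ℤ) + 1) - ((k : ℤ) + 1))) /
             (1 - t0*t1*t2*t3 * t ^ (2 * (n : ℤ) - ((j : ℤ) + 1) - ((k : ℤ) + 1))) else 1) *
    (∏ j ∈ K, ∏ k ∈ K,
        if lam j = lam k ∧ eps n p.1 p.2 j > eps n p.1 p.2 k then rat n t j k else 1) *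
    (∏ j ∈ p.2, ∏ k ∈ p.1, if lam j = lam k + 1 then rat n t j k else 1) *
    (∏ j ∈ K, t0 ^ (-(eps n p.1 p.2 j))) *
    (∏ j ∈ K, ∏ k ∈ K,
        if j < k ∧ eps n p.1 p.2 j ≠ eps n p.1 p.2 k ∧ eps n p.1 p.2 k = 0
        then t ^ (-(eps n p.1 p.2 j)) else 1) *
    (∏ j ∈ K, ∏ k ∈ K,
        if j < k ∧ lam j = lam k ∧ eps n p.1 p.2 k - eps n p.1 p.2 j = 1 then t⁻¹ else 1)

/-- the coefficient `W_{J+,J-}(λ)` (four-parameter case). -/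
def W4 (n : ℕ) (t t0 t1 t2 t3 : ℂ) (lam : Fin n → ℤ) (Jp Jm : Finset (Fin n)) : ℂ :=
  (∏ j ∈ Jp, if lam j = 1 then 1 - t0*t1*t2*t3 * t ^ (en n j + (m0c n lam : ℤ)) else 1) *
  pairProd n t lam Jp Jm *
  ∏ j ∈ Jp, if lam j = 0 then
    ((1 - t0*t1*t2*t3 * t ^ (en n j - 1)) *
     (1 - t0*t1*t2*t3 * t ^ (en n j + (m0c n lam : ℤ) + (m1c n lam : ℤ) - (m1p n lam Jp : ℤ))) *
     ((1 - t0 * t1 * tn n t j) * (1 - t0 * t2 * tn n t j) * (1 - t0 * t3 * tn n t j) *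
      (1 - t1 * t2 * tn n t j) * (1 - t1 * t3 * tn n t j) * (1 - t2 * t3 * tn n t j))) /
    ((1 - t0*t1*t2*t3 * t ^ (2 * en n j - 1)) * (1 - t0*t1*t2*t3 * t ^ (2 * en n j)) ^ 2 *
     (1 - t0*t1*t2*t3 * t ^ (2 * en n j + 1)))
  else 1

/-- the difference operator `H_l` (four-parameter case). -/
def H4 (n : ℕ) (t t0 t1 t2 t3 : ℂ) (l : ℕ) (f : Lam n → ℂ) : Lam n → ℂ := fun lam =>
  ∑ p ∈ (univ : Finset (Finset (Fin n) × Finset (Fin n))).filter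
      (fun p => Disjoint p.1 p.2 ∧ p.1.card + p.2.card ≤ l),
    if h : IsPart n (shift n lam.1 p.1 p.2) then
      U4 n t t0 t1 t2 t3 (p.1ᶜ ∩ p.2ᶜ) (l - (p.1.card + p.2.card)) lam.1 *
      W4 n t t0 t1 t2 t3 lam.1 p.1 p.2 * f ⟨_, h⟩
    else 0

/-- the gauge function `h(λ)` (four-parameter case). -/
def h4 (n : ℕ) (t t0 t1 t2 t3 : ℂ) (lam : Fin n → ℤ) : ℂ :=
  ∏ j : Fin n,
    t0 ^ (lam j) * t ^ (en n j * lam j) *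
    (if lam j = 0 then 1 - t0*t1*t2*t3 * t ^ (en n j + (m0c n lam : ℤ) - 1) else 1) *
    (if lam j = 0 then 1 else
      (1 - t1 * t2 * tn n t j) * (1 - t1 * t3 * tn n t j) * (1 - t2 * t3 * tn n t j))

/-- the box `[0, 2π]^n`. -/
def box (n : ℕ) : Set (Fin n → ℝ) := Set.univ.pi fun _ => Set.Icc 0 (2 * Real.pi)


/-- the weighted measure `|Δ(ξ)|² dξ` on the box `[0,2π]^n`. -/
def wmeas (n : ℕ) (t t0 t1 t2 t3 : ℝ) : Measure (Fin n → ℝ) :=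
  ((volume : Measure (Fin n → ℝ)).restrict (box n)).withDensity
    fun xi => ENNReal.ofReal
      ((norm (Dlt n (t : ℂ) (t0 : ℂ) (t1 : ℂ) (t2 : ℂ) (t3 : ℂ)
        (fun j => (xi j : ℂ)))) ^ 2)

/-- the normalization integral `∫_{[0,2π]^n} |P_λ(ξ) Δ(ξ)|² dξ`. -/
def nInt (n : ℕ) (t t0 t1 t2 t3 : ℝ) (lam : Fin n → ℤ) : ℝ :=
  ∫ xi in box n,
    (norm (P n (t : ℂ) (t0 : ℂ) (t1 : ℂ) (t2 : ℂ) (t3 : ℂ) lam (fun j => (xi j : ℂ)) *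
      Dlt n (t : ℂ) (t0 : ℂ) (t1 : ℂ) (t2 : ℂ) (t3 : ℂ) (fun j => (xi j : ℂ)))) ^ 2

/-!
In the variables `z_j = exp(iξ_j)` the sum over `W_n` splits along the cosets of `W_{n-1}`, indexed
by the value `x_p` or `x_p⁻¹` taken by `z_1`. At the principal point `x_j = b t^{n-j}`, two
neighbouring variables make a pair factor vanish unless `z_1` is one of the two extreme values
`b t^{n-1}` and `b⁻¹`, and for these the product of the pair factors telescopes. This leaves a
two-term recursion in `n`.

For `λ_1 > 0` and `b = t_0` the factor `1 - t_0 z_1` also removes the term `z_1 = b⁻¹`, so the sum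
is a product. For `λ = 0` both terms stay, but the sum does not depend on `b`; proving this for all
`b` at once makes the recursion collapse to the Poincaré polynomial
`∏_j (1 - t^j) (1 + t^{j-1}) / (1 - t)` of `W_n`.
-/

section Field

variable {K : Type*} [Field K]

/-- The factor of `C_λ` belonging to a pair `j < k`, in the variables `y = exp(iξ_j)` and
`x = exp(iξ_k)`. -/
def pairFactor (t y x : K) : K :=
  ((1 - t * (y / x)) * (1 - t * (y * x))) / ((1 - y / x) * (1 - y * x))

/-- The action of a sign on a multiplicative variable `x = exp(-iξ)`: the sign `-1` of `act`,
encoded by `true`, produces `exp(i(-ξ)) = x`, and the sign `1` produces `exp(iξ) = x⁻¹`. -/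
def signPow (s : Bool) (x : K) : K := if s then x else x⁻¹

/-- The sum over `W_n` of `∏_{j<k} pairFactor t z_j z_k · ∏_j f_j(z_j)`, where `z` runs through the
`W_n`-images of `x`. The one-variable factors `f_j` are arbitrary. -/
def hyperoctahedralSum {n : ℕ} (t : K) (f : Fin n → K → K) (x : Fin n → K) : K :=
  ∑ w : Equiv.Perm (Fin n) × (Fin n → Bool),
    (∏ j, ∏ k ∈ Ioi j, pairFactor t (signPow (w.2 j) (x (w.1 j))) (signPow (w.2 k) (x (w.1 k)))) *
      ∏ j, f j (signPow (w.2 j) (x (w.1 j)))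

/-- The geometric progression `(b t^{n-1}, …, b t, b)`; for `b = t_0` it is the point `iρ` of the
paper in the variables `exp(-iξ_j)`. -/
def principalPoint (n : ℕ) (t b : K) : Fin n → K := fun j => b * t ^ (j.rev : ℕ)

/-- The denominators met when evaluating `hyperoctahedralSum` at `principalPoint n t b` are
nonzero. -/
structure IsNonresonant (n : ℕ) (t b : K) : Prop where
  t_ne_zero : t ≠ 0
  b_ne_zero : b ≠ 0
  pow_ne_one : ∀ m < n, t ^ (m + 1) ≠ 1
  sq_mul_pow_ne_one : ∀ m, m + 1 < 2 * n → b ^ 2 * t ^ m ≠ 1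

theorem pairFactor_eq_zero_of_div {t y x : K} (h : t * (y / x) = 1) : pairFactor t y x = 0 := by
  simp [pairFactor, h]

theorem pairFactor_eq_zero_of_mul {t y x : K} (h : t * (y * x) = 1) : pairFactor t y x = 0 := by
  simp [pairFactor, h]

theorem pairFactor_inv_right (t y x : K) : pairFactor t y x⁻¹ = pairFactor t y x := by
  simp only [pairFactor, div_inv_eq_mul, ← div_eq_mul_inv, mul_comm]

theorem pairFactor_signPow_right (t y x : K) (s : Bool) :
    pairFactor t y (signPow s x) = pairFactor t y x := by
  cases s <;> simp [signPow, pairFactor_inv_right]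

/-- The representative `0 ↦ p`, `j + 1 ↦ p.succAbove (e j)` of the coset of `S_n` in `S_{n+1}`
indexed by `p`. -/
def permOfImageZero {n : ℕ} (p : Fin (n + 1)) (e : Equiv.Perm (Fin n)) :
    Equiv.Perm (Fin (n + 1)) :=
  (Equiv.Perm.decomposeFin.symm (0, e)).trans p.cycleRange.symm

theorem permOfImageZero_zero {n : ℕ} (p : Fin (n + 1)) (e : Equiv.Perm (Fin n)) :
    permOfImageZero p e 0 = p := by
  simp [permOfImageZero]

theorem permOfImageZero_succ {n : ℕ} (p : Fin (n + 1)) (e : Equiv.Perm (Fin n)) (j : Fin n) :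
    permOfImageZero p e j.succ = p.succAbove (e j) := by
  simp [permOfImageZero]

/-- The element of `W_{n+1}` given by the image and the sign of the first coordinate together with
an element of `W_n` acting on the remaining ones. -/
def signedPermOfImageZero {n : ℕ}
    (q : (Fin (n + 1) × Bool) × (Equiv.Perm (Fin n) × (Fin n → Bool))) :
    Equiv.Perm (Fin (n + 1)) × (Fin (n + 1) → Bool) :=
  (permOfImageZero q.1.1 q.2.1, Fin.cons q.1.2 q.2.2)

theorem signedPermOfImageZero_bijective (n : ℕ) :
    Function.Bijective (signedPermOfImageZero (n := n)) := by
  rw [Fintype.bijective_iff_injective_and_card]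
  constructor
  · rintro ⟨⟨p, a⟩, e, s⟩ ⟨⟨p', a'⟩, e', s'⟩ h
    obtain ⟨hperm, hsign⟩ := Prod.mk.inj h
    obtain rfl : p = p' := by
      simpa only [permOfImageZero_zero] using DFunLike.congr_fun hperm 0
    obtain rfl : e = e' := by
      ext1 j
      simpa [permOfImageZero_succ] using DFunLike.congr_fun hperm j.succ
    obtain ⟨rfl, rfl⟩ := Fin.cons_injective2 hsign
    rfl
  · simp only [Fintype.card_prod, Fintype.card_fin, Fintype.card_bool, Fintype.card_perm,
      Fintype.card_pi, prod_const, card_univ, Nat.factorial_succ, pow_succ]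
    ring

theorem hyperoctahedralSum_succ {n : ℕ} (t : K) (f : Fin (n + 1) → K → K) (x : Fin (n + 1) → K) :
    hyperoctahedralSum t f x = ∑ p, ∑ s,
      (∏ k, pairFactor t (signPow s (x p)) (x (p.succAbove k))) * f 0 (signPow s (x p)) *
        hyperoctahedralSum t (Fin.tail f) (fun j => x (p.succAbove j)) := by
  simp only [hyperoctahedralSum]
  rw [← (signedPermOfImageZero_bijective n).sum_comp, Fintype.sum_prod_type,
    Fintype.sum_prod_type]
  refine sum_congr rfl fun p _ => sum_congr rfl fun s _ => ?_
  rw [mul_sum]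
  refine sum_congr rfl fun w _ => ?_
  simp only [signedPermOfImageZero, Fin.prod_univ_succ, Fin.prod_Ioi_zero, Fin.prod_Ioi_succ,
    permOfImageZero_zero, permOfImageZero_succ, Fin.cons_zero, Fin.cons_succ,
    pairFactor_signPow_right, Fin.tail]
  rw [Equiv.prod_comp w.1 fun k => pairFactor t (signPow s (x p)) (x (p.succAbove k))]
  ring

theorem principalPoint_zero (n : ℕ) (t b : K) : principalPoint (n + 1) t b 0 = b * t ^ n := by
  simp [principalPoint]

theorem principalPoint_last (n : ℕ) (t b : K) :
    principalPoint (n + 1) t b (Fin.last n) = b := by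
  simp [principalPoint]

theorem principalPoint_succ {n : ℕ} (t b : K) (j : Fin n) :
    principalPoint (n + 1) t b j.succ = principalPoint n t b j := by
  simp [principalPoint, Fin.rev_succ]

theorem principalPoint_castSucc {n : ℕ} (t b : K) (j : Fin n) :
    principalPoint (n + 1) t b j.castSucc = principalPoint n t (b * t) j := by
  simp only [principalPoint, Fin.rev_castSucc, Fin.val_succ, pow_succ', mul_assoc]

theorem principalPoint_mul {n : ℕ} (t b : K) (j : Fin n) :
    principalPoint n t (b * t) j = t * principalPoint n t b j := by
  simp only [principalPoint]
  ring

theorem prod_comp_principalPoint (n : ℕ) (t b : K) (g : K → K) :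
    ∏ k, g (principalPoint n t b k) = ∏ i ∈ range n, g (b * t ^ i) := by
  rw [← Fin.prod_univ_eq_prod_range (fun i => g (b * t ^ i)), ← Equiv.prod_comp Fin.revPerm]
  simp only [principalPoint, Fin.revPerm_apply, Fin.rev_rev]

-- The factors telescope: `t y / (b t^{i+1}) = y / (b t^i)` and `t y (b t^i) = y (b t^{i+1})`.
theorem prod_pairFactor_geometric_mul {t b y : K} (ht : t ≠ 0) (n : ℕ)
    (hdiv : ∀ i < n, y / (b * t ^ i) ≠ 1) (hmul : ∀ i < n, y * (b * t ^ i) ≠ 1) :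
    (∏ i ∈ range n, pairFactor t y (b * t ^ i)) *
        ((1 - t * (y / (b * t ^ n))) * (1 - y * b)) =
      (1 - t * (y / b)) * (1 - y * (b * t ^ n)) := by
  induction n with
  | zero => simp
  | succ n ih =>
    have shift_div : t * (y / (b * t ^ (n + 1))) = y / (b * t ^ n) := by
      rw [pow_succ', mul_left_comm, ← mul_div_assoc, mul_div_mul_left _ _ ht]
    have shift_mul : t * (y * (b * t ^ n)) = y * (b * t ^ (n + 1)) := by ring
    have hd := sub_ne_zero.mpr (hdiv n n.lt_succ_self).symm
    have hm := sub_ne_zero.mpr (hmul n n.lt_succ_self).symm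
    have ih := ih (fun i hi => hdiv i (hi.trans n.lt_succ_self))
      (fun i hi => hmul i (hi.trans n.lt_succ_self))
    calc (∏ i ∈ range (n + 1), pairFactor t y (b * t ^ i)) *
          ((1 - t * (y / (b * t ^ (n + 1)))) * (1 - y * b))
        = (∏ i ∈ range n, pairFactor t y (b * t ^ i)) *
            ((1 - t * (y / (b * t ^ n))) * (1 - y * b)) *
            ((1 - y * (b * t ^ (n + 1))) / (1 - y * (b * t ^ n))) := by
          rw [prod_range_succ, shift_div, pairFactor, shift_mul]
          generalize 1 - y / (b * t ^ n) = d at hd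
          generalize 1 - y * (b * t ^ n) = m at hm
          field_simp
      _ = (1 - t * (y / b)) * (1 - y * (b * t ^ (n + 1))) := by
          rw [ih, mul_assoc, mul_div_cancel₀ _ hm]

namespace IsNonresonant

variable {n : ℕ} {t b : K}

theorem of_succ (h : IsNonresonant (n + 1) t b) : IsNonresonant n t b where
  t_ne_zero := h.t_ne_zero
  b_ne_zero := h.b_ne_zero
  pow_ne_one m hm := h.pow_ne_one m (by lia)
  sq_mul_pow_ne_one m hm := h.sq_mul_pow_ne_one m (by lia)

theorem mul_of_succ (h : IsNonresonant (n + 1) t b) : IsNonresonant n t (b * t) where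
  t_ne_zero := h.t_ne_zero
  b_ne_zero := mul_ne_zero h.b_ne_zero h.t_ne_zero
  pow_ne_one m hm := h.pow_ne_one m (by lia)
  sq_mul_pow_ne_one m hm := by
    rw [mul_pow, mul_assoc, ← pow_add]
    exact h.sq_mul_pow_ne_one (2 + m) (by lia)

theorem one_sub_ne_zero (h : IsNonresonant n t b) (hn : 0 < n) : 1 - t ≠ 0 :=
  sub_ne_zero.mpr (by simpa using (h.pow_ne_one 0 hn).symm)

theorem one_sub_sq_mul_pow_ne_zero (h : IsNonresonant (n + 1) t b) : 1 - b ^ 2 * t ^ n ≠ 0 :=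
  sub_ne_zero.mpr (h.sq_mul_pow_ne_one n (by lia)).symm

theorem prod_pairFactor_first (h : IsNonresonant (n + 1) t b) :
    ∏ k, pairFactor t (b * t ^ n) (principalPoint n t b k) =
      (1 - t ^ (n + 1)) / (1 - t) * ((1 - (b * t ^ n) ^ 2) / (1 - b ^ 2 * t ^ n)) := by
  have hb := h.b_ne_zero
  have ht := h.t_ne_zero
  have key := prod_pairFactor_geometric_mul (b := b) (y := b * t ^ n) ht n
    (fun i hi => by
      obtain ⟨m, rfl⟩ := Nat.exists_eq_add_of_lt hi
      have quotient : b * t ^ (i + m + 1) / (b * t ^ i) = t ^ (m + 1) := by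
        field_simp
        ring
      exact quotient ▸ h.pow_ne_one m (by lia))
    (fun i hi => by
      have product : b * t ^ n * (b * t ^ i) = b ^ 2 * t ^ (n + i) := by ring
      exact product ▸ h.sq_mul_pow_ne_one (n + i) (by lia))
  have extreme : b * t ^ n / (b * t ^ n) = 1 := div_self (mul_ne_zero hb (pow_ne_zero n ht))
  have base : b * t ^ n / b = t ^ n := mul_div_cancel_left₀ _ hb
  have square : b * t ^ n * b = b ^ 2 * t ^ n := by ring
  rw [extreme, base, square, mul_one, ← pow_succ', ← pow_two] at key
  rw [prod_comp_principalPoint, div_mul_div_comm, eq_div_iff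
    (mul_ne_zero (h.one_sub_ne_zero n.succ_pos) h.one_sub_sq_mul_pow_ne_zero), key]

theorem prod_pairFactor_last (h : IsNonresonant (n + 1) t b) :
    ∏ k, pairFactor t b⁻¹ (principalPoint n t (b * t) k) =
      (1 - t ^ (n + 1)) / (1 - t) * (t ^ n * (1 - b ^ 2) / (1 - b ^ 2 * t ^ n)) := by
  have hb := h.b_ne_zero
  have ht := h.t_ne_zero
  have key := prod_pairFactor_geometric_mul (b := b * t) (y := b⁻¹) ht n
    (fun i hi => by
      have quotient : b⁻¹ / (b * t * t ^ i) = (b ^ 2 * t ^ (i + 1))⁻¹ := by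
        field_simp
        ring
      rw [quotient, inv_ne_one]
      exact h.sq_mul_pow_ne_one (i + 1) (by lia))
    (fun i hi => by
      have product : b⁻¹ * (b * t * t ^ i) = t ^ (i + 1) := by
        field_simp
        ring
      exact product ▸ h.pow_ne_one i (by lia))
  have base : t * (b⁻¹ / (b * t)) = (b ^ 2)⁻¹ := by field_simp
  have extreme : t * (b⁻¹ / (b * t * t ^ n)) = (b ^ 2 * t ^ n)⁻¹ := by field_simp
  have last_product : b⁻¹ * (b * t * t ^ n) = t ^ (n + 1) := by
    rw [mul_assoc, inv_mul_cancel_left₀ hb, pow_succ']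
  rw [base, extreme, inv_mul_cancel_left₀ hb, last_product] at key
  have sq_cancel : b ^ 2 * (b ^ 2)⁻¹ = 1 := mul_inv_cancel₀ (pow_ne_zero 2 hb)
  have extreme_cancel : b ^ 2 * t ^ n * (b ^ 2 * t ^ n)⁻¹ = 1 :=
    mul_inv_cancel₀ (mul_ne_zero (pow_ne_zero 2 hb) (pow_ne_zero n ht))
  rw [prod_comp_principalPoint, div_mul_div_comm, eq_div_iff
    (mul_ne_zero (h.one_sub_ne_zero n.succ_pos) h.one_sub_sq_mul_pow_ne_zero)]
  linear_combination -(b ^ 2 * t ^ n) * key + (1 - t ^ (n + 1)) * t ^ n * sq_cancel -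
    (∏ i ∈ range n, pairFactor t b⁻¹ (b * t * t ^ i)) * (1 - t) * extreme_cancel

end IsNonresonant

-- Two neighbours of the progression have quotient `t`, and the index `p.succAbove k` reaches the
-- neighbour of `p` on either side.
theorem prod_pairFactor_principalPoint_eq_zero {n : ℕ} {t b : K} (ht : t ≠ 0) (hb : b ≠ 0)
    {p : Fin (n + 1)} {s : Bool} (hs : p ≠ if s then 0 else Fin.last n) :
    ∏ k, pairFactor t (signPow s (principalPoint (n + 1) t b p))
      (principalPoint (n + 1) t b (p.succAbove k)) = 0 := by
  have hx (q : Fin n) : principalPoint n t b q ≠ 0 := mul_ne_zero hb (pow_ne_zero _ ht)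
  cases s with
  | true =>
    obtain ⟨q, rfl⟩ := Fin.exists_succ_eq.mpr hs
    refine prod_eq_zero (mem_univ q) (pairFactor_eq_zero_of_div ?_)
    simp only [signPow, if_true, Fin.succAbove_succ_self, principalPoint_succ,
      principalPoint_castSucc, principalPoint_mul]
    field_simp [hx q]
  | false =>
    obtain ⟨q, rfl⟩ := Fin.exists_castSucc_eq.mpr hs
    refine prod_eq_zero (mem_univ q) (pairFactor_eq_zero_of_mul ?_)
    simp only [signPow, Bool.false_eq_true, if_false, Fin.succAbove_castSucc_self,
      principalPoint_succ, principalPoint_castSucc, principalPoint_mul]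
    field_simp [hx q]

theorem hyperoctahedralSum_principalPoint_succ {n : ℕ} {t b : K} (h : IsNonresonant (n + 1) t b)
    (f : Fin (n + 1) → K → K) :
    hyperoctahedralSum t f (principalPoint (n + 1) t b) =
      (1 - t ^ (n + 1)) / (1 - t) *
        ((1 - (b * t ^ n) ^ 2) / (1 - b ^ 2 * t ^ n) * f 0 (b * t ^ n) *
            hyperoctahedralSum t (Fin.tail f) (principalPoint n t b) +
          t ^ n * (1 - b ^ 2) / (1 - b ^ 2 * t ^ n) * f 0 b⁻¹ *
            hyperoctahedralSum t (Fin.tail f) (principalPoint n t (b * t))) := by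
  have vanish (s : Bool) (p : Fin (n + 1)) (hs : p ≠ if s then 0 else Fin.last n) :=
    prod_pairFactor_principalPoint_eq_zero h.t_ne_zero h.b_ne_zero hs
  rw [hyperoctahedralSum_succ, sum_comm, Fintype.sum_bool,
    Fintype.sum_eq_single 0 fun p hp => by rw [vanish true p hp, zero_mul, zero_mul],
    Fintype.sum_eq_single (Fin.last n) fun p hp => by rw [vanish false p hp, zero_mul, zero_mul]]
  simp only [signPow, Bool.false_eq_true, if_true, if_false, principalPoint_zero,
    principalPoint_last, Fin.succAbove_zero_apply, Fin.succAbove_last_apply, principalPoint_succ,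
    principalPoint_castSucc, h.prod_pairFactor_first, h.prod_pairFactor_last]
  ring

theorem hyperoctahedralSum_one_principalPoint {n : ℕ} {t b : K} (h : IsNonresonant n t b) :
    hyperoctahedralSum t (fun (_ : Fin n) _ => 1) (principalPoint n t b) =
      ∏ j : Fin n, (1 - t ^ ((j : ℕ) + 1)) / (1 - t) * (1 + t ^ (j : ℕ)) := by
  induction n generalizing b with
  | zero => simp [hyperoctahedralSum]
  | succ n ih =>
    have hr := h.one_sub_sq_mul_pow_ne_zero
    have weights : (1 - (b * t ^ n) ^ 2) / (1 - b ^ 2 * t ^ n) +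
        t ^ n * (1 - b ^ 2) / (1 - b ^ 2 * t ^ n) = 1 + t ^ n := by
      field_simp
      ring
    have tail_one : Fin.tail (fun (_ : Fin (n + 1)) (_ : K) => (1 : K)) = fun _ _ => 1 := rfl
    rw [hyperoctahedralSum_principalPoint_succ h, tail_one, ih h.of_succ, ih h.mul_of_succ,
      Fin.prod_univ_castSucc]
    simp only [Fin.val_castSucc, Fin.val_last, ← weights]
    ring

theorem IsPart.comp_succ {n : ℕ} {lam : Fin (n + 1) → ℤ} (h : IsPart (n + 1) lam) :
    IsPart n (fun j => lam j.succ) :=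
  ⟨fun _ _ hij => h.1 _ _ (Fin.succ_le_succ_iff.mpr hij), fun _ => h.2 _⟩

theorem IsPart.eq_zero {n : ℕ} {lam : Fin (n + 1) → ℤ} (h : IsPart (n + 1) lam)
    (h0 : lam 0 = 0) : lam = 0 :=
  funext fun j => le_antisymm ((h.1 0 j (Fin.zero_le j)).trans_eq h0) (h.2 j)

theorem hyperoctahedralSum_principalPoint_of_isPart {n : ℕ} {t b : K} (h : IsNonresonant n t b)
    {f : ℤ → K → K} (hf_zero : ∀ y, f 0 y = 1) (hf_pos : ∀ l, 0 < l → f l b⁻¹ = 0)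
    {lam : Fin n → ℤ} (hlam : IsPart n lam) :
    hyperoctahedralSum t (fun j => f (lam j)) (principalPoint n t b) =
      (∏ j : Fin n, (1 - t ^ ((j : ℕ) + 1)) / (1 - t)) *
        ∏ j, if lam j = 0 then 1 + t ^ (j.rev : ℕ) else
          (1 - principalPoint n t b j ^ 2) / (1 - b * principalPoint n t b j) *
            f (lam j) (principalPoint n t b j) := by
  induction n with
  | zero => simp [hyperoctahedralSum]
  | succ n ih =>
    by_cases h0 : lam 0 = 0
    · obtain rfl := hlam.eq_zero h0
      have one_factors : (fun (j : Fin (n + 1)) => f ((0 : Fin (n + 1) → ℤ) j)) = fun _ _ => 1 :=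
        funext fun _ => funext hf_zero
      rw [one_factors, hyperoctahedralSum_one_principalPoint h, prod_mul_distrib,
        ← Equiv.prod_comp Fin.revPerm fun j : Fin (n + 1) => 1 + t ^ (j : ℕ)]
      simp
    · have tail_factors : Fin.tail (fun j => f (lam j)) = fun j => f (lam j.succ) := rfl
      rw [hyperoctahedralSum_principalPoint_succ h, tail_factors, ih h.of_succ hlam.comp_succ,
        hf_pos _ ((hlam.2 0).lt_of_ne' h0), Fin.prod_univ_castSucc, Fin.prod_univ_succ,
        if_neg h0]
      simp only [Fin.val_castSucc, Fin.val_last, Fin.rev_succ, principalPoint_zero,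
        principalPoint_succ, ← mul_assoc, ← pow_two]
      ring

/-- The factor of `C_λ(ξ) e^{-i⟨λ,ξ⟩}` belonging to one coordinate, in the variable `y = exp(iξ_j)`
and for the part `l = λ_j`. -/
def oneVariableFactor (t0 t1 t2 t3 : K) (l : ℤ) (y : K) : K :=
  (if 0 < l then ((1 - t0 * y) * (1 - t1 * y) * (1 - t2 * y) * (1 - t3 * y)) / (1 - y ^ 2)
    else 1) * y ^ (-l)

theorem oneVariableFactor_zero (t0 t1 t2 t3 y : K) : oneVariableFactor t0 t1 t2 t3 0 y = 1 := by
  simp [oneVariableFactor]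

theorem oneVariableFactor_inv_eq_zero {t0 : K} (ht0 : t0 ≠ 0) (t1 t2 t3 : K) {l : ℤ} (hl : 0 < l) :
    oneVariableFactor t0 t1 t2 t3 l t0⁻¹ = 0 := by
  simp [oneVariableFactor, hl, ht0]

theorem mul_oneVariableFactor_of_pos {t0 y : K} (t1 t2 t3 : K) {l : ℤ} (hl : 0 < l)
    (hy : 1 - y ^ 2 ≠ 0) (ht0y : 1 - t0 * y ≠ 0) :
    (1 - y ^ 2) / (1 - t0 * y) * oneVariableFactor t0 t1 t2 t3 l y =
      (1 - t1 * y) * (1 - t2 * y) * (1 - t3 * y) * y ^ (-l) := by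
  rw [oneVariableFactor, if_pos hl]
  generalize 1 - y ^ 2 = u at hy
  generalize 1 - t0 * y = v at ht0y
  field_simp

theorem IsNonresonant.mul_oneVariableFactor_principalPoint {n : ℕ} {t t0 : K}
    (h : IsNonresonant n t t0) (t1 t2 t3 : K) {l : ℤ} (hl : 0 < l) (j : Fin n) :
    (1 - principalPoint n t t0 j ^ 2) / (1 - t0 * principalPoint n t t0 j) *
        oneVariableFactor t0 t1 t2 t3 l (principalPoint n t t0 j) =
      (1 - t1 * principalPoint n t t0 j) * (1 - t2 * principalPoint n t t0 j) *
        (1 - t3 * principalPoint n t t0 j) * principalPoint n t t0 j ^ (-l) := by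
  have square : principalPoint n t t0 j ^ 2 = t0 ^ 2 * t ^ (2 * (j.rev : ℕ)) := by
    rw [principalPoint]
    ring
  have product : t0 * principalPoint n t t0 j = t0 ^ 2 * t ^ (j.rev : ℕ) := by
    rw [principalPoint]
    ring
  apply mul_oneVariableFactor_of_pos t1 t2 t3 hl <;> rw [sub_ne_zero, ne_comm]
  · exact square ▸ h.sq_mul_pow_ne_one _ (by lia)
  · exact product ▸ h.sq_mul_pow_ne_one _ (by lia)

theorem hyperoctahedralSum_oneVariableFactor {n : ℕ} {t t0 : K} (h : IsNonresonant n t t0)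
    (t1 t2 t3 : K) {lam : Fin n → ℤ} (hlam : IsPart n lam) :
    hyperoctahedralSum t (fun j => oneVariableFactor t0 t1 t2 t3 (lam j))
        (principalPoint n t t0) =
      (∏ j : Fin n, (1 - t ^ ((j : ℕ) + 1)) / (1 - t)) *
        ∏ j, (if lam j = 0 then 1 + t ^ (j.rev : ℕ) else
          (1 - t1 * principalPoint n t t0 j) * (1 - t2 * principalPoint n t t0 j) *
            (1 - t3 * principalPoint n t t0 j)) * principalPoint n t t0 j ^ (-lam j) := by
  rw [hyperoctahedralSum_principalPoint_of_isPart h (oneVariableFactor_zero t0 t1 t2 t3)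
    (fun _ => oneVariableFactor_inv_eq_zero h.b_ne_zero t1 t2 t3) hlam]
  congr 1
  refine prod_congr rfl fun j _ => ?_
  split_ifs with hj
  · simp [hj]
  · exact h.mul_oneVariableFactor_principalPoint t1 t2 t3 ((hlam.2 j).lt_of_ne' hj) j

end Field

theorem en_eq_rev {n : ℕ} (j : Fin n) : en n j = (j.rev : ℕ) := by
  rw [en, Fin.val_rev]
  omega

theorem tn_eq_pow_rev {n : ℕ} (t : ℂ) (j : Fin n) : tn n t j = t ^ (j.rev : ℕ) := by
  rw [tn, en_eq_rev, zpow_natCast]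

section HallLittlewood

variable {n : ℕ}

theorem Cf_mul_exp (t t0 t1 t2 t3 : ℂ) (lam : Fin n → ℤ) (xi : Fin n → ℂ) :
    Cf n t t0 t1 t2 t3 lam xi * exp (-I * ∑ j, (lam j : ℂ) * xi j) =
      (∏ j, ∏ k ∈ Ioi j, pairFactor t (exp (I * xi j)) (exp (I * xi k))) *
        ∏ j, oneVariableFactor t0 t1 t2 t3 (lam j) (exp (I * xi j)) := by
  have exp_sum_mul : exp (-I * ∑ j, (lam j : ℂ) * xi j) = ∏ j, exp (I * xi j) ^ (-lam j) := by
    rw [mul_sum, exp_sum]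
    refine prod_congr rfl fun j _ => ?_
    rw [← exp_int_mul]
    push_cast
    ring_nf
  have exp_two_mul (x : ℂ) : exp (2 * I * x) = exp (I * x) ^ 2 := by
    rw [mul_assoc, ← Nat.cast_two, exp_nat_mul]
  simp only [exp_sum_mul, Cf, pairFactor, oneVariableFactor, mul_assoc, prod_mul_distrib]
  simp only [← filter_lt_eq_Ioi, prod_filter, mul_sub, mul_add, exp_sub, exp_add,
    ← mul_assoc, exp_two_mul]

theorem exp_I_mul_act (w : Equiv.Perm (Fin n) × (Fin n → Bool)) (xi : Fin n → ℂ) (j : Fin n) :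
    exp (I * act n w xi j) = signPow (w.2 j) (exp (-(I * xi (w.1 j)))) := by
  rw [act, signPow]
  split_ifs
  · ring_nf
  · rw [← exp_neg]
    ring_nf

theorem P_eq_ccf_mul_hyperoctahedralSum (t t0 t1 t2 t3 : ℂ) (lam : Fin n → ℤ) (xi : Fin n → ℂ) :
    P n t t0 t1 t2 t3 lam xi = ccf n t t0 t1 t2 t3 lam *
      hyperoctahedralSum t (fun j => oneVariableFactor t0 t1 t2 t3 (lam j))
        (fun j => exp (-(I * xi j))) := by
  simp only [P, Cf_mul_exp, exp_I_mul_act, hyperoctahedralSum]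

theorem ccf_eq_prod_principalPoint (t t0 t1 t2 t3 : ℂ) (lam : Fin n → ℤ) :
    ccf n t t0 t1 t2 t3 lam = ∏ j : Fin n,
      principalPoint n t t0 j ^ lam j * (1 - t) / ((1 - t ^ ((j : ℕ) + 1)) *
        if lam j = 0 then 1 + t ^ (j.rev : ℕ) else
          (1 - t1 * principalPoint n t t0 j) * (1 - t2 * principalPoint n t t0 j) *
            (1 - t3 * principalPoint n t t0 j)) := by
  refine prod_congr rfl fun j _ => ?_
  rw [en_eq_rev, tn_eq_pow_rev, zpow_mul, zpow_natCast, ← mul_zpow, ← Nat.cast_add_one,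
    zpow_natCast, principalPoint]
  split_ifs <;> ring_nf

theorem ccf_mul_hyperoctahedralSum_oneVariableFactor {t t0 t1 t2 t3 : ℂ}
    (h : IsNonresonant n t t0)
    (hden : ∀ j : Fin n, 1 + tn n t j ≠ 0 ∧ 1 - t0 * t1 * tn n t j ≠ 0 ∧
      1 - t0 * t2 * tn n t j ≠ 0 ∧ 1 - t0 * t3 * tn n t j ≠ 0)
    {lam : Fin n → ℤ} (hlam : IsPart n lam) :
    ccf n t t0 t1 t2 t3 lam * hyperoctahedralSum t
      (fun j => oneVariableFactor t0 t1 t2 t3 (lam j)) (principalPoint n t t0) = 1 := by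
  rw [hyperoctahedralSum_oneVariableFactor h _ _ _ hlam, ccf_eq_prod_principalPoint,
    ← prod_mul_distrib, ← prod_mul_distrib]
  refine prod_eq_one fun j _ => ?_
  have point_ne_zero : principalPoint n t t0 j ≠ 0 :=
    mul_ne_zero h.b_ne_zero (pow_ne_zero _ h.t_ne_zero)
  have one_sub_ne_zero : 1 - t ≠ 0 := h.one_sub_ne_zero j.pos
  have one_sub_pow_ne_zero : 1 - t ^ ((j : ℕ) + 1) ≠ 0 :=
    sub_ne_zero.mpr (h.pow_ne_one j j.isLt).symm
  have denominator_ne_zero : (if lam j = 0 then 1 + t ^ (j.rev : ℕ) else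
      (1 - t1 * principalPoint n t t0 j) * (1 - t2 * principalPoint n t t0 j) *
        (1 - t3 * principalPoint n t t0 j)) ≠ 0 := by
    obtain ⟨h0, h1, h2, h3⟩ := tn_eq_pow_rev t j ▸ hden j
    have reassoc (c : ℂ) : c * principalPoint n t t0 j = t0 * c * t ^ (j.rev : ℕ) := by
      rw [principalPoint]
      ring
    rw [reassoc, reassoc, reassoc]
    split_ifs
    exacts [h0, mul_ne_zero (mul_ne_zero h1 h2) h3]
  rw [zpow_neg]
  generalize (if lam j = 0 then _ else _ : ℂ) = d at denominator_ne_zero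
  field_simp

theorem Generic.exp_mul_exp_ne_one {xi : Fin n → ℂ} (hgen : Generic n xi) (j k : Fin n) :
    exp (-(I * xi j)) * exp (-(I * xi k)) ≠ 1 := by
  wlog hjk : j ≤ k generalizing j k
  · rw [mul_comm]
    exact this k j (le_of_not_ge hjk)
  obtain ⟨off_diagonal, diagonal⟩ := hgen (1, fun _ => true)
  rw [← exp_add, ne_comm, ← sub_ne_zero]
  obtain rfl | hjk := hjk.eq_or_lt
  · convert diagonal j using 3
    simp only [act, if_true, Equiv.Perm.coe_one, id_eq]
    ring
  · convert (off_diagonal j k hjk).2 using 3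
    simp only [act, if_true, Equiv.Perm.coe_one, id_eq]
    ring

theorem Generic.sq_mul_pow_ne_one {t t0 : ℂ} {xi : Fin n → ℂ} (hgen : Generic n xi)
    (hxi : ∀ j, exp (-(I * xi j)) = principalPoint n t t0 j) {m : ℕ} (hm : m + 1 < 2 * n) :
    t0 ^ 2 * t ^ m ≠ 1 := by
  let j : Fin n := ⟨m / 2, by lia⟩
  let k : Fin n := ⟨m - m / 2, by lia⟩
  have product : t0 ^ 2 * t ^ m = principalPoint n t t0 j.rev * principalPoint n t t0 k.rev := by
    simp only [principalPoint, Fin.rev_rev, j, k]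
    rw [mul_mul_mul_comm, ← pow_add, ← pow_two, Nat.add_sub_cancel' (Nat.div_le_self m 2)]
  rw [product, ← hxi, ← hxi]
  exact hgen.exp_mul_exp_ne_one _ _

theorem exp_neg_I_mul_I_mul_log {t t0 : ℝ} (ht : 0 < t) (ht0 : 0 < t0) (j : Fin n) :
    exp (-(I * (I * ((Real.log t0 + ((n : ℝ) - ((j : ℕ) : ℝ) - 1) * Real.log t : ℝ) : ℂ)))) =
      t0 * tn n t j := by
  have exponent : (n : ℝ) - ((j : ℕ) : ℝ) - 1 = ((j.rev : ℕ) : ℝ) := by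
    simpa [en] using congrArg (Int.cast : ℤ → ℝ) (en_eq_rev j)
  rw [← mul_assoc, I_mul_I, neg_one_mul, neg_neg, exponent, ← ofReal_exp, Real.exp_add,
    Real.exp_log ht0, Real.exp_nat_mul, Real.exp_log ht, tn_eq_pow_rev]
  push_cast
  rfl

end HallLittlewood

theorem principal_specialization_general (n : ℕ) (t t0 t1 t2 t3 : ℂ) (ht : t ≠ 0) (ht0 : t0 ≠ 0)
    (xi : Fin n → ℂ) (hxi : ∀ j, exp (-(I * xi j)) = t0 * tn n t j) (hgen : Generic n xi)
    (hden : ∀ j : Fin n,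
      1 - t ^ ((j : ℤ) + 1) ≠ 0 ∧ 1 + tn n t j ≠ 0 ∧ 1 - t0 * t1 * tn n t j ≠ 0 ∧
      1 - t0 * t2 * tn n t j ≠ 0 ∧ 1 - t0 * t3 * tn n t j ≠ 0)
    (lam : Fin n → ℤ) (hlam : IsPart n lam) :
    P n t t0 t1 t2 t3 lam xi = 1 := by
  have hpow (m : ℕ) (hm : m < n) : t ^ (m + 1) ≠ 1 :=
    (sub_ne_zero.mp (mod_cast (hden ⟨m, hm⟩).1)).symm
  have hpoint : (fun j => exp (-(I * xi j))) = principalPoint n t t0 := by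
    funext j
    rw [hxi, tn_eq_pow_rev, principalPoint]
  have hres : IsNonresonant n t t0 :=
    ⟨ht, ht0, hpow, fun _ => hgen.sq_mul_pow_ne_one (congrFun hpoint)⟩
  rw [P_eq_ccf_mul_hyperoctahedralSum, hpoint]
  exact ccf_mul_hyperoctahedralSum_oneVariableFactor hres (fun j => (hden j).2) hlam

/-- unit principal specialization value `P_λ(iρ) = 1`. -/
theorem principal_specialization (n : ℕ) (hn : 1 ≤ n) (t t0 : ℝ) (t1 t2 t3 : ℂ)
    (ht : 0 < t) (ht1 : t < 1) (ht0 : 0 < t0) (ht0' : t0 < 1)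
    (xi : Fin n → ℂ)
    (hxi : xi = fun j : Fin n => Complex.I *
      ((Real.log t0 + ((n : ℝ) - ((j : ℕ) : ℝ) - 1) * Real.log t : ℝ) : ℂ))
    (hgen : Generic n xi)
    (hden : ∀ j : Fin n,
      (1 - (t : ℂ) ^ ((j : ℤ) + 1)) ≠ 0 ∧ (1 + tn n (t : ℂ) j) ≠ 0 ∧
      (1 - (t0 : ℂ) * t1 * tn n (t : ℂ) j) ≠ 0 ∧ (1 - (t0 : ℂ) * t2 * tn n (t : ℂ) j) ≠ 0 ∧
      (1 - (t0 : ℂ) * t3 * tn n (t : ℂ) j) ≠ 0)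
    (lam : Fin n → ℤ) (hlam : IsPart n lam) :
    P n (t : ℂ) (t0 : ℂ) t1 t2 t3 lam xi = 1 := by
  subst hxi
  exact principal_specialization_general n t t0 t1 t2 t3 (ofReal_ne_zero.mpr ht.ne')
    (ofReal_ne_zero.mpr ht0.ne') _ (exp_neg_I_mul_I_mul_log ht ht0) hgen hden lam hlam

end QB

end
end

section
/- Fourier inversion / completeness of the hyperoctahedral Hall–Littlewood functions: assume t and t_0, t_1, t_2, t_3 are real parameters in (−1,1)∖{0}. Then for each λ ∈ Λ the integral ∫_{[0,2π]^n} |P_λ(ξ) Δ(ξ)|^2 dξ is finite and strictly positive, so that ν_λ = (∫_{[0,2π]^n} |P_λ(ξ) Δ(ξ)|^2 dξ)^{−1} is well defined; moreover, for every f : Λ → ℂ with Σ_{λ∈Λ} |f(λ)|^2 ν_λ < ∞, the series f̂(ξ) = Σ_{λ∈Λ} f(λ) · conj(P_λ(ξ)) · ν_λ converges in the Hilbert space L^2([0,2π]^n, |Δ(ξ)|^2 dξ), and one has the inversion formula f(λ) = ∫_{[0,2π]^n} f̂(ξ) P_λ(ξ) |Δ(ξ)|^2 dξ for every λ ∈ Λ.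 -/
open Finset Complex MeasureTheory

noncomputable section

namespace QB

/-!
On the torus, `P_λ` is up to a constant the sum over the hyperoctahedral group of the terms
`C_λ(x) e^{-i⟨λ, x⟩}`, and `|Δ|² = |C|⁻²` where `C` is the `c`-function with all its factors. Since
the weight is invariant, an inner product of two such sums reduces to integrals of
`conj (C_λ(x) e^{-i⟨λ, x⟩}) C_μ(v x) e^{-i⟨μ, v x⟩} |Δ(x)|²`, with only one group element `v`.

The integrand restricted to the cosets of the one-parameter subgroup `s ↦ λ s` extends
holomorphically in `z = e^{is}` to the closed unit disc: `conj C_λ / conj C` is constant there,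
`C_μ(v x) / C(x)` has no poles except for a power of `z`, and that power is absorbed by the
character when `|μ| ≤ |λ|`. By the mean value property the integral equals that of the value at
`z = 0`, which vanishes when `μ ≠ λ` because the remaining power of `z` is positive; this gives
orthogonality.

To see that `P_λ ≠ 0`, pair it with the analogous sum in which all coordinate factors of `C_λ` are
dropped. Only the stabilizer of `λ` survives, and the same extension argument turns the pairing into
a square norm `∫ |∑_v C(v x)|²` over the stabilizer, which is not zero. Inversion is then the
expansion in an orthogonal family of a Hilbert space.
-/

open scoped Real ComplexConjugate

instance : Fact (0 < 2 * π) := ⟨Real.two_pi_pos⟩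

/-- The circle `ℝ / 2πℤ` of angles. -/
abbrev Angle : Type := AddCircle (2 * π)

/-- The torus `(ℝ / 2πℤ)^ι`; the functions of the theorem are `2π`-periodic and live on it. -/
abbrev Torus (ι : Type*) : Type _ := ι → Angle

/-! ### The circle -/

/-- The character `y ↦ e^{iy}` of the circle. -/
def e (y : Angle) : ℂ := AddCircle.toCircle y

lemma e_coe (x : ℝ) : e x = exp (I * x) := by
  rw [e, AddCircle.toCircle_apply_mk, div_self Real.two_pi_pos.ne', one_mul, Circle.coe_exp,
    mul_comm]

@[simp] lemma e_zero : e 0 = 1 := by simp [e]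

lemma e_add (x y : Angle) : e (x + y) = e x * e y := by
  simp [e, AddCircle.toCircle_add]

lemma e_neg (y : Angle) : e (-y) = (e y)⁻¹ := by
  simp [e, AddCircle.toCircle_neg]

lemma e_zsmul (m : ℤ) (y : Angle) : e (m • y) = e y ^ m := by
  simp [e, AddCircle.toCircle_zsmul]

lemma e_sum {κ : Type*} (s : Finset κ) (f : κ → Angle) : e (∑ k ∈ s, f k) = ∏ k ∈ s, e (f k) := by
  classical
  induction s using Finset.induction_on with
  | empty => simp
  | insert k s hk ih => rw [sum_insert hk, prod_insert hk, e_add, ih]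

@[simp] lemma norm_e (y : Angle) : ‖e y‖ = 1 := Circle.norm_coe _

lemma e_ne_zero (y : Angle) : e y ≠ 0 := Circle.coe_ne_zero _

lemma conj_e (y : Angle) : conj (e y) = e (-y) := by
  rw [e_neg, inv_eq_conj (norm_e y)]

lemma e_eq_one_iff {y : Angle} : e y = 1 ↔ y = 0 := by
  rw [e, Circle.coe_eq_one, ← AddCircle.toCircle_zero (T := 2 * π),
    (AddCircle.injective_toCircle Real.two_pi_pos.ne').eq_iff]

lemma continuous_e : Continuous e :=
  continuous_subtype_val.comp AddCircle.continuous_toCircle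

lemma e_mem_closedBall (y : Angle) : e y ∈ Metric.closedBall (0 : ℂ) 1 := by
  simp [norm_e]

lemma one_sub_mul_ne_zero {a z : ℂ} (ha : ‖a‖ < 1) (hz : z ∈ Metric.closedBall (0 : ℂ) 1) :
    1 - a * z ≠ 0 := by
  rw [mem_closedBall_zero_iff] at hz
  intro h
  have hnorm : ‖a * z‖ = 1 := by rw [← sub_eq_zero.mp h, norm_one]
  rw [norm_mul] at hnorm
  nlinarith [norm_nonneg a, norm_nonneg z]

lemma integral_e_comp {R : ℂ → ℂ} (hR : DifferentiableOn ℂ R (Metric.closedBall 0 1)) :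
    ∫ y, R (e y) = (2 * π : ℝ) • R 0 := by
  have hmean : Real.circleAverage R 0 1 = R 0 :=
    (hR.diffContOnCl_ball (by simp)).circleAverage
  rw [← hmean, Real.circleAverage, smul_inv_smul₀ Real.two_pi_pos.ne',
    ← AddCircle.intervalIntegral_preimage (2 * π) 0, zero_add]
  simp only [circleMap_zero, ofReal_one, one_mul, e_coe, mul_comm I]

/-! ### The torus -/

section Torus

variable {ι A : Type*} [Fintype ι] [AddCommGroup A]

/-- The pairing `⟨β, x⟩ = ∑ j, β_j x_j` of a weight with a point of `A^ι`. It serves both for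
points of the torus and, with `A = ℤ`, for weights. -/
def pairing (β : ι → ℤ) : (ι → A) →+ A where
  toFun x := ∑ j, β j • x j
  map_zero' := by simp
  map_add' x y := by simp [smul_add, sum_add_distrib]

lemma pairing_apply (β : ι → ℤ) (x : ι → A) : pairing β x = ∑ j, β j • x j := rfl

lemma pairing_add_left (α β : ι → ℤ) (x : ι → A) :
    pairing (α + β) x = pairing α x + pairing β x := by
  simp [pairing_apply, add_smul, sum_add_distrib]

lemma pairing_neg_left (β : ι → ℤ) (x : ι → A) : pairing (-β) x = -pairing β x := by
  simp [pairing_apply]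

lemma pairing_single [DecidableEq ι] (i : ι) (m : ℤ) (x : ι → A) :
    pairing (Pi.single i m) x = m • x i := by
  simp [pairing_apply, Pi.single_apply, ite_smul]

lemma pairing_smul_const (β ω : ι → ℤ) (s : A) :
    pairing β (fun j => ω j • s) = pairing β ω • s := by
  simp [pairing_apply, sum_smul, mul_smul]

lemma e_pairing (β : ι → ℤ) (x : Torus ι) : e (pairing β x) = ∏ j, e (x j) ^ β j := by
  simp_rw [pairing_apply, e_sum, e_zsmul]

lemma continuous_pairing (β : ι → ℤ) : Continuous (pairing β : Torus ι → Angle) := by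
  simp only [pairing, AddMonoidHom.coe_mk, ZeroHom.coe_mk]
  fun_prop

/-- A point of the torus is generic if it lies on none of the subtori `⟨β, x⟩ = 0`, `β ≠ 0`. -/
def IsGeneric (x : Torus ι) : Prop :=
  ∀ β : ι → ℤ, β ≠ 0 → pairing β x ≠ 0

lemma surjective_pairing {β : ι → ℤ} (hβ : β ≠ 0) :
    Function.Surjective (pairing β : Torus ι → Angle) := by
  classical
  obtain ⟨i, hi⟩ := Function.ne_iff.mp hβ
  intro y
  obtain ⟨y, rfl⟩ := QuotientAddGroup.mk_surjective y
  refine ⟨Pi.single i ((y / β i : ℝ) : Angle), ?_⟩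
  have hy : β i • (y / β i : ℝ) = y := by
    rw [zsmul_eq_mul, mul_div_cancel₀ _ (Int.cast_ne_zero.mpr hi)]
  rw [pairing_apply, Finset.sum_eq_single i (by simp +contextual) (by simp), Pi.single_eq_same]
  exact congrArg ((↑) : ℝ → Angle) hy

lemma ae_isGeneric : ∀ᵐ x : Torus ι, IsGeneric x := by
  simp only [IsGeneric, ae_all_iff]
  intro β hβ
  have hmap : (Measure.map (pairing β : Torus ι → Angle) volume).IsAddHaarMeasure :=
    Measure.isAddHaarMeasure_map_of_isFiniteMeasure _ (pairing β : Torus ι →+ Angle)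
      (continuous_pairing β) (surjective_pairing hβ)
  have hsmul := Measure.isAddLeftInvariant_eq_smul
    (Measure.map (pairing β : Torus ι → Angle) volume) volume
  have hzero := Measure.map_apply (μ := volume) (continuous_pairing β).measurable
    (measurableSet_singleton 0)
  have hpoint : volume ({0} : Set Angle) = 0 := by
    rw [← Metric.closedBall_zero, AddCircle.volume_closedBall]
    simp [Real.pi_nonneg]
  rw [hsmul, Measure.smul_apply, hpoint, smul_zero] at hzero
  exact measure_eq_zero_iff_ae_notMem.mp hzero.symm

end Torus

/-! ### Signed permutations -/

section SignedPerm

variable {ι A : Type*}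

/-- The hyperoctahedral group of signed permutations of the coordinates `ι`. -/
abbrev SignedPerm (ι : Type*) : Type _ :=
  (ι → ℤˣ) ⋊[mulAutArrow (G := Equiv.Perm ι)] Equiv.Perm ι

instance [Fintype ι] [DecidableEq ι] : Fintype (SignedPerm ι) :=
  Fintype.ofEquiv _ SemidirectProduct.equivProd.symm

instance [AddCommGroup A] : DistribMulAction (SignedPerm ι) (ι → A) where
  smul v x j := (v.left j : ℤ) • x (v.right⁻¹ j)
  one_smul x := by ext j; exact one_smul ℤ (x j)
  mul_smul v w x := by
    ext j
    change ((v.left j * w.left (v.right⁻¹ j) : ℤˣ) : ℤ) • x ((v.right * w.right)⁻¹ j) =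
      (v.left j : ℤ) • (w.left (v.right⁻¹ j) : ℤ) • x (w.right⁻¹ (v.right⁻¹ j))
    rw [Units.val_mul, mul_smul, mul_inv_rev, Equiv.Perm.mul_apply]
  smul_zero v := by ext j; exact smul_zero (v.left j : ℤ)
  smul_add v x y := by ext j; exact smul_add (v.left j : ℤ) (x _) (y _)

lemma signedPerm_smul_apply [AddCommGroup A] (v : SignedPerm ι) (x : ι → A) (j : ι) :
    (v • x) j = (v.left j : ℤ) • x (v.right⁻¹ j) := rfl

lemma signedPerm_smul_apply_right [AddCommGroup A] (v : SignedPerm ι) (x : ι → A) (j : ι) :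
    (v • x) (v.right j) = (v.left (v.right j) : ℤ) • x j := by
  simp [signedPerm_smul_apply]

lemma signedPerm_inv_smul_apply [AddCommGroup A] (v : SignedPerm ι) (x : ι → A) (j : ι) :
    (v⁻¹ • x) j = (v.left (v.right j) : ℤ) • x (v.right j) := by
  have h := signedPerm_smul_apply_right v (v⁻¹ • x) j
  rw [smul_inv_smul] at h
  rw [h, smul_smul, ← Units.val_mul, Int.units_mul_self, Units.val_one, one_smul]

variable [Fintype ι]

lemma pairing_smul [AddCommGroup A] (v : SignedPerm ι) (β : ι → ℤ) (x : ι → A) :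
    pairing β (v • x) = pairing (v⁻¹ • β) x := by
  rw [pairing_apply, pairing_apply, ← Equiv.sum_comp v.right]
  refine sum_congr rfl fun j _ => ?_
  rw [signedPerm_smul_apply_right, signedPerm_inv_smul_apply, smul_smul, smul_eq_mul, mul_comm]

lemma two_mul_pairing_sub_inv_smul (lam : ι → ℤ) (v : SignedPerm ι) :
    2 * pairing (lam - v⁻¹ • lam) lam = ∑ j, (lam j - (v⁻¹ • lam) j) ^ 2 := by
  have hinv : pairing (v⁻¹ • lam) (v⁻¹ • lam) = pairing lam lam := by
    rw [← pairing_smul, smul_inv_smul]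
  simp only [pairing_apply, smul_eq_mul] at hinv ⊢
  calc 2 * ∑ j, (lam - v⁻¹ • lam) j * lam j
      = ∑ j, (lam j - (v⁻¹ • lam) j) ^ 2 +
          (∑ j, lam j * lam j - ∑ j, (v⁻¹ • lam) j * (v⁻¹ • lam) j) := by
        rw [mul_sum, ← sum_sub_distrib, ← sum_add_distrib]
        exact sum_congr rfl fun j _ => by rw [Pi.sub_apply]; ring
    _ = ∑ j, (lam j - (v⁻¹ • lam) j) ^ 2 := by rw [hinv, sub_self, add_zero]

instance : ContinuousConstSMul (SignedPerm ι) (Torus ι) where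
  continuous_const_smul v :=
    continuous_pi fun j => (continuous_apply (v.right⁻¹ j)).zsmul (v.left j : ℤ)

instance : SMulInvariantMeasure (SignedPerm ι) (Torus ι) volume where
  measure_preimage_smul v _ hs :=
    ((DistribMulAction.toAddEquiv (Torus ι) v).toAddMonoidHom.measurePreserving
      (continuous_const_smul v) (MulAction.surjective v) rfl).measure_preimage hs.nullMeasurableSet

lemma IsGeneric.smul {x : Torus ι} (hx : IsGeneric x) (v : SignedPerm ι) : IsGeneric (v • x) := by
  intro β hβ
  rw [pairing_smul]
  exact hx _ ((smul_ne_zero_iff_ne _).mpr hβ)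

end SignedPerm

/-! ### Symmetrization over a finite group -/

section Symmetrization

variable {G X : Type*} [Group G] [MulAction G X] [MeasurableSpace X] [MeasurableConstSMul G X]
  {μ : Measure X} [SMulInvariantMeasure G X μ] {f g w : X → ℂ}

lemma integrable_smul_mul_smul_mul (hw : ∀ (v : G) x, w (v • x) = w x)
    (h : ∀ v : G, Integrable (fun x => f x * g (v • x) * w x) μ) (u v : G) :
    Integrable (fun x => f (u • x) * g (v • x) * w x) μ := by
  refine ((measurePreserving_smul u μ).integrable_comp_of_integrable (h (v * u⁻¹))).congr
    (.of_forall fun x => ?_)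
  simp [smul_smul, hw]

lemma integral_smul_mul_smul_mul (hw : ∀ (v : G) x, w (v • x) = w x) (u v : G) :
    ∫ x, f (u • x) * g (v • x) * w x ∂μ = ∫ x, f x * g ((v * u⁻¹) • x) * w x ∂μ := by
  rw [← integral_smul_eq_self (μ := μ) (fun x => f x * g ((v * u⁻¹) • x) * w x) (g := u)]
  simp [smul_smul, hw]

variable [Fintype G]

lemma integrable_sum_smul_mul_sum_smul_mul (hw : ∀ (v : G) x, w (v • x) = w x)
    (h : ∀ v : G, Integrable (fun x => f x * g (v • x) * w x) μ) :
    Integrable (fun x => (∑ u : G, f (u • x)) * (∑ v : G, g (v • x)) * w x) μ := by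
  simp_rw [sum_mul_sum, sum_mul]
  exact integrable_finsetSum _ fun u _ => integrable_finsetSum _ fun v _ =>
    integrable_smul_mul_smul_mul hw h u v

lemma integral_sum_smul_mul_sum_smul_mul (hw : ∀ (v : G) x, w (v • x) = w x)
    (h : ∀ v : G, Integrable (fun x => f x * g (v • x) * w x) μ) :
    ∫ x, (∑ u : G, f (u • x)) * (∑ v : G, g (v • x)) * w x ∂μ =
      Fintype.card G * ∑ v : G, ∫ x, f x * g (v • x) * w x ∂μ := by
  have hint := integrable_smul_mul_smul_mul hw h
  calc ∫ x, (∑ u : G, f (u • x)) * (∑ v : G, g (v • x)) * w x ∂μ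
      = ∑ u : G, ∑ v : G, ∫ x, f (u • x) * g (v • x) * w x ∂μ := by
        simp_rw [sum_mul_sum, sum_mul]
        rw [integral_finsetSum _ fun u _ => integrable_finsetSum _ fun v _ => hint u v]
        exact sum_congr rfl fun u _ => integral_finsetSum _ fun v _ => hint u v
    _ = ∑ _ : G, ∑ v : G, ∫ x, f x * g (v • x) * w x ∂μ :=
        sum_congr rfl fun u _ => Fintype.sum_equiv (Equiv.mulRight u⁻¹) _ _ fun v =>
          integral_smul_mul_smul_mul hw u v
    _ = Fintype.card G * ∑ v : G, ∫ x, f x * g (v • x) * w x ∂μ := by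
        rw [sum_const, card_univ, nsmul_eq_mul]

end Symmetrization

/-! ### Holomorphic extension along a one-parameter subgroup -/

section ExtendsAlong

variable {ι κ : Type*} {ω : ι → ℤ} {F F₀ G G₀ : Torus ι → ℂ}

/-- `F` is continuous and its restriction to each coset of the one-parameter subgroup
`s ↦ (ω_j s)_j` extends holomorphically to the closed unit disc in the variable `e^{is}`, the value
at the centre of the disc through `x` being `F₀ x`. -/
structure ExtendsAlong (ω : ι → ℤ) (F F₀ : Torus ι → ℂ) : Prop where
  continuous : Continuous F
  exists_disc : ∀ x, ∃ R : ℂ → ℂ, DifferentiableOn ℂ R (Metric.closedBall 0 1) ∧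
    (∀ s : Angle, F (x + fun j => ω j • s) = R (e s)) ∧ R 0 = F₀ x

namespace ExtendsAlong

lemma of_invariant (hF : Continuous F) (h : ∀ x (s : Angle), F (x + fun j => ω j • s) = F x) :
    ExtendsAlong ω F F where
  continuous := hF
  exists_disc x := ⟨fun _ => F x, differentiableOn_const _, h x, rfl⟩

lemma mul (hF : ExtendsAlong ω F F₀) (hG : ExtendsAlong ω G G₀) :
    ExtendsAlong ω (fun x => F x * G x) (fun x => F₀ x * G₀ x) where
  continuous := hF.continuous.mul hG.continuous
  exists_disc x := by
    obtain ⟨R, hR, hRF, hR0⟩ := hF.exists_disc x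
    obtain ⟨S, hS, hSG, hS0⟩ := hG.exists_disc x
    exact ⟨fun z => R z * S z, hR.mul hS, fun s => by rw [hRF, hSG], by simp only [hR0, hS0]⟩

lemma prod {s : Finset κ} {F F₀ : κ → Torus ι → ℂ} (h : ∀ k ∈ s, ExtendsAlong ω (F k) (F₀ k)) :
    ExtendsAlong ω (fun x => ∏ k ∈ s, F k x) (fun x => ∏ k ∈ s, F₀ k x) := by
  classical
  induction s using Finset.induction_on with
  | empty => simpa using of_invariant continuous_const fun _ _ => rfl
  | insert k s hk ih =>
    simp_rw [prod_insert hk]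
    exact (h k (mem_insert_self k s)).mul (ih fun j hj => h j (mem_insert_of_mem hj))

variable [Fintype ι]

lemma comp_pairing {R : ℂ → ℂ} (hR : DifferentiableOn ℂ R (Metric.closedBall 0 1))
    {β : ι → ℤ} (hβ : 0 ≤ pairing β ω) :
    ExtendsAlong ω (fun x => R (e (pairing β x)))
      (fun x => R (if pairing β ω = 0 then e (pairing β x) else 0)) where
  continuous := hR.continuousOn.comp_continuous
    (continuous_e.comp (continuous_pairing β)) fun _ => e_mem_closedBall _
  exists_disc x := by
    lift pairing β ω to ℕ using hβ with k hk
    refine ⟨fun z => R (e (pairing β x) * z ^ k), hR.comp (by fun_prop) fun z hz => ?_,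
      fun s => ?_, ?_⟩
    · rw [mem_closedBall_zero_iff] at hz ⊢
      rw [norm_mul, norm_e, one_mul, norm_pow]
      exact pow_le_one₀ (norm_nonneg z) hz
    · rw [map_add, pairing_smul_const, ← hk, e_add, e_zsmul, zpow_natCast]
    · by_cases hk0 : k = 0 <;> simp [hk0]

lemma exists_mul_character (hF : ExtendsAlong ω F F₀) {β : ι → ℤ} (hβ : 0 ≤ pairing β ω) :
    ∃ G₀, ExtendsAlong ω (fun x => e (pairing β x) * F x) G₀ ∧ (0 < pairing β ω → G₀ = 0) := by
  refine ⟨_, (comp_pairing differentiableOn_id hβ).mul hF, fun hpos => ?_⟩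
  ext x
  simp [hpos.ne']

theorem integral_eq (h : ExtendsAlong ω F F₀) : ∫ x, F x = ∫ x, F₀ x := by
  have hcont : Continuous fun p : Torus ι × Angle => F (p.1 + fun j => ω j • p.2) :=
    h.continuous.comp (by fun_prop)
  have hdisc (x : Torus ι) : ∫ s : Angle, F (x + fun j => ω j • s) = (2 * π : ℝ) • F₀ x := by
    obtain ⟨R, hR, hRF, hR0⟩ := h.exists_disc x
    simp_rw [hRF, integral_e_comp hR, hR0]
  have hFubini : (2 * π : ℝ) • ∫ x, F x = (2 * π : ℝ) • ∫ x, F₀ x :=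
    calc (2 * π : ℝ) • ∫ x, F x = ∫ _ : Angle, ∫ x, F x := by
          simp [measureReal_def, Real.pi_nonneg]
      _ = ∫ s : Angle, ∫ x, F (x + fun j => ω j • s) := by
          simp_rw [integral_add_right_eq_self]
      _ = ∫ x, ∫ s : Angle, F (x + fun j => ω j • s) :=
          (integral_integral_swap (hcont.integrable_of_hasCompactSupport
            (HasCompactSupport.of_compactSpace _))).symm
      _ = (2 * π : ℝ) • ∫ x, F₀ x := by simp_rw [hdisc, integral_smul]
  exact smul_right_injective ℂ Real.two_pi_pos.ne' hFubini

end ExtendsAlong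

end ExtendsAlong

namespace ExtendsAlong

variable {ι : Type*} [Finite ι] {ω : ι → ℤ}

lemma comp_coord {R : ℂ → ℂ} (hR : DifferentiableOn ℂ R (Metric.closedBall 0 1)) {j : ι}
    (hj : 0 ≤ ω j) :
    ExtendsAlong ω (fun x => R (e (x j))) (fun x => R (if ω j = 0 then e (x j) else 0)) := by
  classical
  have := Fintype.ofFinite ι
  have hβ (A : Type) [AddCommGroup A] (y : ι → A) : pairing (Pi.single j 1) y = y j := by
    rw [pairing_single, one_smul]
  simpa only [hβ] using comp_pairing hR (β := Pi.single j 1) (ω := ω) (by rwa [hβ])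

lemma comp_add {R : ℂ → ℂ} (hR : DifferentiableOn ℂ R (Metric.closedBall 0 1)) {j k : ι}
    (hjk : 0 ≤ ω j + ω k) :
    ExtendsAlong ω (fun x => R (e (x j + x k)))
      (fun x => R (if ω j + ω k = 0 then e (x j + x k) else 0)) := by
  classical
  have := Fintype.ofFinite ι
  obtain ⟨β, hβ⟩ : ∃ β : ι → ℤ, ∀ (A : Type) [AddCommGroup A] (y : ι → A),
      pairing β y = y j + y k :=
    ⟨Pi.single j 1 + Pi.single k 1, fun A _ y => by
      rw [pairing_add_left, pairing_single, pairing_single, one_smul, one_smul]⟩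
  simpa only [hβ] using comp_pairing hR (β := β) (ω := ω) (by rwa [hβ])

lemma comp_sub {R : ℂ → ℂ} (hR : DifferentiableOn ℂ R (Metric.closedBall 0 1)) {j k : ι}
    (hjk : ω k ≤ ω j) :
    ExtendsAlong ω (fun x => R (e (x j - x k)))
      (fun x => R (if ω j - ω k = 0 then e (x j - x k) else 0)) := by
  classical
  have := Fintype.ofFinite ι
  obtain ⟨β, hβ⟩ : ∃ β : ι → ℤ, ∀ (A : Type) [AddCommGroup A] (y : ι → A),
      pairing β y = y j - y k :=
    ⟨Pi.single j 1 + Pi.single k (-1), fun A _ y => by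
      rw [pairing_add_left, pairing_single, pairing_single, one_smul, neg_one_smul,
        ← sub_eq_add_neg]⟩
  simpa only [hβ] using comp_pairing hR (β := β) (ω := ω) (by rwa [hβ, sub_nonneg])

end ExtendsAlong

/-! ### The factors of the `c`-function -/

section Factors

variable {t : ℝ} {τ : Fin 4 → ℝ}

/-- The factor `(1 - t e^{iy}) / (1 - e^{iy})` contributed by a root `ξ_j ± ξ_k` with value `y`. -/
def rootFactor (t : ℝ) (y : Angle) : ℂ := (1 - t * e y) / (1 - e y)

/-- The factor `∏ r, (1 - t_r e^{iy}) / (1 - e^{2iy})` contributed by a coordinate with value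
`y`. -/
def shortFactor (τ : Fin 4 → ℝ) (y : Angle) : ℂ := (∏ r, (1 - τ r * e y)) / (1 - e y ^ 2)

lemma rootFactor_neg (t : ℝ) (y : Angle) : rootFactor t (-y) = conj (rootFactor t y) := by
  simp [rootFactor, conj_e]

lemma shortFactor_neg (τ : Fin 4 → ℝ) (y : Angle) :
    shortFactor τ (-y) = conj (shortFactor τ y) := by
  simp [shortFactor, conj_e]

lemma norm_rootFactor_units_smul (t : ℝ) (ζ : ℤˣ) (y : Angle) :
    ‖rootFactor t ((ζ : ℤ) • y)‖ = ‖rootFactor t y‖ := by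
  rcases Int.units_eq_one_or ζ with rfl | rfl <;> simp [rootFactor_neg]

lemma norm_shortFactor_units_smul (τ : Fin 4 → ℝ) (ζ : ℤˣ) (y : Angle) :
    ‖shortFactor τ ((ζ : ℤ) • y)‖ = ‖shortFactor τ y‖ := by
  rcases Int.units_eq_one_or ζ with rfl | rfl <;> simp [shortFactor_neg]

/-- The ratio `rootFactor (ζ y) / rootFactor y` for a sign `ζ`, as a function of `z = e^{iy}`. -/
def rootReflection (t : ℝ) (ζ : ℤˣ) (z : ℂ) : ℂ :=
  if ζ = 1 then 1 else (t - z) / (1 - t * z)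

lemma one_sub_ofReal_mul_ne_zero {a : ℝ} (ha : |a| < 1) {z : ℂ}
    (hz : z ∈ Metric.closedBall (0 : ℂ) 1) : 1 - a * z ≠ 0 :=
  one_sub_mul_ne_zero (by simpa using ha) hz

lemma differentiableOn_rootReflection (ht : |t| < 1) (ζ : ℤˣ) :
    DifferentiableOn ℂ (rootReflection t ζ) (Metric.closedBall 0 1) := by
  unfold rootReflection
  split_ifs
  · exact differentiableOn_const 1
  · exact DifferentiableOn.div (by fun_prop) (by fun_prop) fun z => one_sub_ofReal_mul_ne_zero ht

lemma rootFactor_units_smul (ht : |t| < 1) (ζ : ℤˣ) (y : Angle) :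
    rootFactor t ((ζ : ℤ) • y) = rootReflection t ζ (e y) * rootFactor t y := by
  rcases Int.units_eq_one_or ζ with rfl | rfl
  · simp [rootReflection]
  · have hy := e_ne_zero y
    have hden := one_sub_ofReal_mul_ne_zero ht (e_mem_closedBall y)
    calc rootFactor t (((-1 : ℤˣ) : ℤ) • y)
        = ((1 - t * (e y)⁻¹) * e y) / ((1 - (e y)⁻¹) * e y) := by
          simp [rootFactor, e_neg, mul_div_mul_right _ _ hy]
      _ = (t - e y) / (1 - e y) := by
          rw [sub_mul, sub_mul, mul_assoc, inv_mul_cancel₀ hy, one_mul, mul_one,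
            ← neg_sub (t : ℂ), ← neg_sub 1 (e y), neg_div_neg_eq]
      _ = rootReflection t (-1) (e y) * rootFactor t y := by
          simp [rootReflection, rootFactor, div_mul_div_cancel₀ hden]

/-- The reciprocal of `rootFactor` as a function of `z = e^{iy}`. -/
def rootInv (t : ℝ) (z : ℂ) : ℂ := (1 - z) / (1 - t * z)

/-- The reciprocal of `shortFactor` as a function of `z = e^{iy}`. -/
def shortInv (τ : Fin 4 → ℝ) (z : ℂ) : ℂ := (1 - z ^ 2) / ∏ r, (1 - τ r * z)

/-- The holomorphic part of the ratio `shortFactor (-y) / shortFactor y` as a function of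
`z = e^{iy}`; the ratio itself has in addition the pole `z⁻²`. -/
def shortReflection (τ : Fin 4 → ℝ) (z : ℂ) : ℂ := -(∏ r, (z - τ r)) / ∏ r, (1 - τ r * z)

lemma differentiableOn_rootInv (ht : |t| < 1) :
    DifferentiableOn ℂ (rootInv t) (Metric.closedBall 0 1) :=
  DifferentiableOn.div (by fun_prop) (by fun_prop) fun _ => one_sub_ofReal_mul_ne_zero ht

lemma differentiableOn_div_prod_one_sub (hτ : ∀ r, |τ r| < 1) {f : ℂ → ℂ}
    (hf : Differentiable ℂ f) :
    DifferentiableOn ℂ (fun z => f z / ∏ r, (1 - τ r * z)) (Metric.closedBall 0 1) :=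
  hf.differentiableOn.div (by fun_prop) fun _ hz =>
    prod_ne_zero_iff.mpr fun r _ => one_sub_ofReal_mul_ne_zero (hτ r) hz

lemma differentiableOn_shortInv (hτ : ∀ r, |τ r| < 1) :
    DifferentiableOn ℂ (shortInv τ) (Metric.closedBall 0 1) :=
  differentiableOn_div_prod_one_sub hτ (by fun_prop)

lemma differentiableOn_shortReflection (hτ : ∀ r, |τ r| < 1) :
    DifferentiableOn ℂ (shortReflection τ) (Metric.closedBall 0 1) :=
  differentiableOn_div_prod_one_sub hτ (by fun_prop)

lemma rootFactor_inv (t : ℝ) (y : Angle) : (rootFactor t y)⁻¹ = rootInv t (e y) := inv_div _ _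

lemma shortFactor_inv (τ : Fin 4 → ℝ) (y : Angle) : (shortFactor τ y)⁻¹ = shortInv τ (e y) :=
  inv_div _ _

lemma rootFactor_ne_zero (ht : |t| < 1) {y : Angle} (hy : y ≠ 0) : rootFactor t y ≠ 0 :=
  div_ne_zero (one_sub_ofReal_mul_ne_zero ht (e_mem_closedBall y))
    (sub_ne_zero.mpr fun h => hy (e_eq_one_iff.mp h.symm))

lemma one_sub_e_sq_ne_zero {y : Angle} (hy : (2 : ℤ) • y ≠ 0) : 1 - e y ^ 2 ≠ 0 := by
  rw [← zpow_ofNat, ← e_zsmul]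
  exact sub_ne_zero.mpr fun h => hy (e_eq_one_iff.mp h.symm)

lemma shortFactor_ne_zero (hτ : ∀ r, |τ r| < 1) {y : Angle} (hy : (2 : ℤ) • y ≠ 0) :
    shortFactor τ y ≠ 0 :=
  div_ne_zero (prod_ne_zero_iff.mpr fun r _ =>
    one_sub_ofReal_mul_ne_zero (hτ r) (e_mem_closedBall y)) (one_sub_e_sq_ne_zero hy)

lemma shortFactor_neg_mul_inv {y : Angle} (hy : (2 : ℤ) • y ≠ 0) :
    shortFactor τ (-y) * (shortFactor τ y)⁻¹ = e y ^ (-2 : ℤ) * shortReflection τ (e y) := by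
  have hz := e_ne_zero y
  have hnum : ∏ r, (1 - τ r * (e y)⁻¹) = (∏ r, (e y - τ r)) * (e y ^ 4)⁻¹ := by
    rw [← inv_pow, ← Fin.prod_const, ← prod_mul_distrib]
    exact prod_congr rfl fun r _ => by rw [sub_mul, mul_inv_cancel₀ hz]
  have hden : (1 - (e y)⁻¹ ^ 2) = -(1 - e y ^ 2) * (e y ^ 2)⁻¹ := by
    field_simp
    ring
  have hsq := one_sub_e_sq_ne_zero hy
  rw [shortFactor_inv, shortFactor, shortInv, shortReflection, e_neg, hnum, hden]
  field_simp

lemma extendsAlong_conj_prod_shortInv (hτ : ∀ r, |τ r| < 1) {ι : Type*} {ω : ι → ℤ}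
    {U : Finset ι} (hω : ∀ j ∈ U, ω j = 0) :
    ExtendsAlong ω (fun x => conj (∏ j ∈ U, shortInv τ (e (x j))))
      (fun x => conj (∏ j ∈ U, shortInv τ (e (x j)))) := by
  refine .of_invariant (continuous_conj.comp (continuous_finsetProd _ fun j _ =>
    (differentiableOn_shortInv hτ).continuousOn.comp_continuous
      (continuous_e.comp (continuous_apply j)) fun _ => e_mem_closedBall _)) fun x s => ?_
  congr 1
  exact prod_congr rfl fun j hj => by simp [hω j hj]

end Factors

/-! ### The `c`-function and its behaviour under signed permutations -/

section CFunction

lemma prod_lt_eq_prod_min_max {ι M : Type*} [Fintype ι] [LinearOrder ι] [CommMonoid M]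
    (σ : Equiv.Perm ι) (f : ι → ι → M) :
    ∏ p : ι × ι with p.1 < p.2, f p.1 p.2 = ∏ p : ι × ι with p.1 < p.2,
      f (min (σ p.1) (σ p.2)) (max (σ p.1) (σ p.2)) := by
  let h : Sym2 ι → M := Sym2.lift
    ⟨fun a b => f (min a b) (max a b), fun a b => by
      simp only [min_comm, max_comm]⟩
  have hsym (g : Sym2 ι → M) :
      ∏ z : Sym2 ι with ¬ z.IsDiag, g z = ∏ p : ι × ι with p.1 < p.2, g s(p.1, p.2) := by
    have hlt : (univ : Finset ι).offDiag.filter (fun p => p.1 < p.2) =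
        univ.filter fun p : ι × ι => p.1 < p.2 := by
      ext p; simpa using ne_of_lt
    rw [← hlt]
    exact sum_sym2_filter_not_isDiag (M := Additive M) univ g
  calc ∏ p : ι × ι with p.1 < p.2, f p.1 p.2
      = ∏ p : ι × ι with p.1 < p.2, h s(p.1, p.2) :=
        prod_congr rfl fun p hp => by simp [h, (mem_filter.mp hp).2.le]
    _ = ∏ z : Sym2 ι with ¬ z.IsDiag, h z := (hsym h).symm
    _ = ∏ z : Sym2 ι with ¬ z.IsDiag, h (z.map σ) :=
        (prod_bijective _ (Finite.injective_iff_bijective.mp (Sym2.map.injective σ.injective))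
          (fun z => by simp [Sym2.isDiag_map σ.injective]) fun z _ => rfl).symm
    _ = ∏ p : ι × ι with p.1 < p.2, h (s(p.1, p.2).map σ) := hsym fun z => h (z.map σ)
    _ = _ := rfl

variable {ι : Type*} [Fintype ι] [LinearOrder ι] {t : ℝ} {τ : Fin 4 → ℝ} {ω : ι → ℤ} {x : Torus ι}

/-- A dominant weight of the hyperoctahedral group: `ω_1 ≥ ⋯ ≥ ω_n ≥ 0`. -/
structure Dominant (ω : ι → ℤ) : Prop where
  antitone : Antitone ω
  nonneg : 0 ≤ ω

/-- The set of coordinates on which the weight `lam` is positive. -/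
def posSupport (lam : ι → ℤ) : Finset ι := {j | 0 < lam j}

lemma mem_compl_posSupport (hω : 0 ≤ ω) {j : ι} : j ∈ (posSupport ω)ᶜ ↔ ω j = 0 := by
  rw [mem_compl, posSupport, mem_filter_univ, not_lt]
  exact (hω j).ge_iff_eq'

/-- The part `∏_{j<k}` of the `c`-function coming from the roots `ξ_j ± ξ_k`. -/
def longC (t : ℝ) (x : Torus ι) : ℂ :=
  ∏ p : ι × ι with p.1 < p.2, rootFactor t (x p.1 - x p.2) * rootFactor t (x p.1 + x p.2)

/-- The `c`-function in which only the coordinates in `S` contribute a `shortFactor`. The factor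
`C_λ` is obtained for `S = {j | 0 < λ_j}` and `1 / Δ` for `S = univ`. -/
def cFun (t : ℝ) (τ : Fin 4 → ℝ) (S : Finset ι) (x : Torus ι) : ℂ :=
  longC t x * ∏ j ∈ S, shortFactor τ (x j)

lemma cFun_empty (t : ℝ) (τ : Fin 4 → ℝ) (x : Torus ι) : cFun t τ ∅ x = longC t x := by
  simp [cFun]

lemma rootFactor_sub_mul_add_units_smul (t : ℝ) (η θ : ℤˣ) (x y : Angle) :
    rootFactor t ((η : ℤ) • x - (θ : ℤ) • y) * rootFactor t ((η : ℤ) • x + (θ : ℤ) • y) =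
      rootFactor t ((η : ℤ) • (x - y)) * rootFactor t ((η : ℤ) • (x + y)) := by
  rcases Int.units_eq_one_or η with rfl | rfl <;> rcases Int.units_eq_one_or θ with rfl | rfl <;>
    simp [mul_comm, sub_eq_add_neg, add_comm]

lemma exists_signs_longC_smul (v : SignedPerm ι) : ∃ ζ ζ' : ι × ι → ℤˣ, ∀ (t : ℝ) (x : Torus ι),
    longC t (v • x) = ∏ p : ι × ι with p.1 < p.2,
      rootFactor t ((ζ p : ℤ) • (x p.1 - x p.2)) * rootFactor t ((ζ' p : ℤ) • (x p.1 + x p.2)) := by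
  let η : ι → ℤˣ := fun a => v.left (v.right a)
  refine ⟨fun p => if v.right p.1 ≤ v.right p.2 then η p.1 else -η p.2,
    fun p => if v.right p.1 ≤ v.right p.2 then η p.1 else η p.2, fun t x => ?_⟩
  rw [longC, prod_lt_eq_prod_min_max v.right
    fun a b => rootFactor t ((v • x) a - (v • x) b) * rootFactor t ((v • x) a + (v • x) b)]
  refine prod_congr rfl fun p _ => ?_
  dsimp only
  split_ifs with hle
  · rw [min_eq_left hle, max_eq_right hle, signedPerm_smul_apply_right,
      signedPerm_smul_apply_right, rootFactor_sub_mul_add_units_smul]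
  · rw [min_eq_right (not_le.mp hle).le, max_eq_left (not_le.mp hle).le,
      signedPerm_smul_apply_right, signedPerm_smul_apply_right, rootFactor_sub_mul_add_units_smul,
      ← neg_sub (x p.1), add_comm (x p.2), smul_neg, Units.val_neg, neg_smul]

lemma norm_longC_smul (t : ℝ) (v : SignedPerm ι) (x : Torus ι) :
    ‖longC t (v • x)‖ = ‖longC t x‖ := by
  obtain ⟨ζ, ζ', h⟩ := exists_signs_longC_smul v
  rw [h]
  simp only [longC, norm_prod, norm_mul, norm_rootFactor_units_smul]

lemma norm_cFun_smul {S : Finset ι} {v : SignedPerm ι} (hS : ∀ j, v.right j ∈ S ↔ j ∈ S)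
    (x : Torus ι) : ‖cFun t τ S (v • x)‖ = ‖cFun t τ S x‖ := by
  rw [cFun, cFun, norm_mul, norm_mul, norm_longC_smul, norm_prod, norm_prod]
  congr 1
  refine (prod_equiv v.right (fun j => (hS j).symm) fun j _ => ?_).symm
  rw [signedPerm_smul_apply_right, norm_shortFactor_units_smul]

lemma exists_extendsAlong_longC_smul (ht : |t| < 1) (hω : Dominant ω)
    (v : SignedPerm ι) :
    ∃ K K₀, ExtendsAlong ω K K₀ ∧ ∀ x, longC t (v • x) = K x * longC t x := by
  obtain ⟨ζ, ζ', h⟩ := exists_signs_longC_smul v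
  refine ⟨_, _, ExtendsAlong.prod (s := univ.filter fun p : ι × ι => p.1 < p.2) fun p hp =>
    (ExtendsAlong.comp_sub (differentiableOn_rootReflection ht (ζ p))
      (hω.antitone (mem_filter.mp hp).2.le)).mul
    (ExtendsAlong.comp_add (differentiableOn_rootReflection ht (ζ' p))
      (add_nonneg (hω.nonneg p.1) (hω.nonneg p.2))), fun x => ?_⟩
  rw [h, longC, ← prod_mul_distrib]
  refine prod_congr rfl fun p _ => ?_
  rw [rootFactor_units_smul ht, rootFactor_units_smul ht]
  ring

lemma extendsAlong_longC_inv (ht : |t| < 1) (hω : StrictAnti ω) (hω0 : ∀ j, 0 < ω j) :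
    ExtendsAlong ω (fun x => (longC t x)⁻¹) 1 := by
  have h := ExtendsAlong.prod (s := univ.filter fun p : ι × ι => p.1 < p.2) fun p hp =>
    (ExtendsAlong.comp_sub (differentiableOn_rootInv ht)
      (hω.antitone (mem_filter.mp hp).2.le)).mul
    (ExtendsAlong.comp_add (differentiableOn_rootInv ht) (add_pos (hω0 p.1) (hω0 p.2)).le)
  convert h using 1
  · ext x
    simp only [longC, ← prod_inv_distrib, mul_inv, rootFactor_inv]
  · ext x
    refine (prod_eq_one fun p hp => ?_).symm
    have hsub : ω p.1 - ω p.2 ≠ 0 := sub_ne_zero.mpr (hω (mem_filter.mp hp).2).ne'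
    have hadd : ω p.1 + ω p.2 ≠ 0 := (add_pos (hω0 p.1) (hω0 p.2)).ne'
    simp [hsub, hadd, rootInv]

lemma IsGeneric.two_smul_ne_zero (hx : IsGeneric x) (j : ι) : (2 : ℤ) • x j ≠ 0 := by
  rw [← pairing_single]
  exact hx _ (by simp)

lemma IsGeneric.sub_ne_zero (hx : IsGeneric x) {j k : ι} (hjk : j ≠ k) : x j - x k ≠ 0 := by
  have h := hx (Pi.single j 1 + Pi.single k (-1)) fun h => by simpa [hjk] using congrFun h j
  rwa [pairing_add_left, pairing_single, pairing_single, one_smul, neg_one_smul,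
    ← sub_eq_add_neg] at h

lemma IsGeneric.add_ne_zero (hx : IsGeneric x) {j k : ι} (hjk : j ≠ k) : x j + x k ≠ 0 := by
  have h := hx (Pi.single j 1 + Pi.single k 1) fun h => by simpa [hjk] using congrFun h j
  rwa [pairing_add_left, pairing_single, pairing_single, one_smul, one_smul] at h

lemma longC_ne_zero (ht : |t| < 1) (hx : IsGeneric x) : longC t x ≠ 0 :=
  prod_ne_zero_iff.mpr fun _ hp =>
    have hlt := (mem_filter.mp hp).2
    mul_ne_zero (rootFactor_ne_zero ht (hx.sub_ne_zero hlt.ne))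
      (rootFactor_ne_zero ht (hx.add_ne_zero hlt.ne))

lemma cFun_ne_zero (ht : |t| < 1) (hτ : ∀ r, |τ r| < 1) (hx : IsGeneric x) (S : Finset ι) :
    cFun t τ S x ≠ 0 :=
  mul_ne_zero (longC_ne_zero ht hx) (prod_ne_zero_iff.mpr fun j _ =>
    shortFactor_ne_zero hτ (hx.two_smul_ne_zero j))

end CFunction

/-! ### Hall–Littlewood sums and their orthogonality -/

section HallLittlewoodSum

/-- The order of the pole in the `a`-th coordinate `e^{i x_a}` of
`cFun S (v • x) / cFun univ x`. -/
def poleOrder {ι : Type*} [DecidableEq ι] (v : SignedPerm ι) (S : Finset ι) (a : ι) : ℤ :=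
  if v.right a ∈ S ∧ v.left (v.right a) = -1 then 2 else 0

lemma poleOrder_empty {ι : Type*} [DecidableEq ι] (v : SignedPerm ι) : poleOrder v ∅ = 0 := by
  ext a
  simp [poleOrder]

variable {ι : Type*} [Fintype ι] [LinearOrder ι] {t : ℝ} {τ : Fin 4 → ℝ} {ω : ι → ℤ}
  {S U : Finset ι} {v : SignedPerm ι} {x : Torus ι}

/-- The density `‖cFun U‖⁻²`; for `U = univ` it is the weight `|Δ|²` of the orthogonality
relations. -/
def cWeight (t : ℝ) (τ : Fin 4 → ℝ) (U : Finset ι) (x : Torus ι) : ℂ :=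
  ((‖cFun t τ U x‖ ^ 2)⁻¹ : ℝ)

lemma cWeight_eq (t : ℝ) (τ : Fin 4 → ℝ) (U : Finset ι) (x : Torus ι) :
    cWeight t τ U x = conj (cFun t τ U x)⁻¹ * (cFun t τ U x)⁻¹ := by
  rw [cWeight, ← inv_pow, ← norm_inv, ← normSq_eq_norm_sq, normSq_eq_conj_mul_self]

lemma conj_cWeight (t : ℝ) (τ : Fin 4 → ℝ) (U : Finset ι) (x : Torus ι) :
    conj (cWeight t τ U x) = cWeight t τ U x :=
  conj_ofReal _

lemma cWeight_smul (hU : ∀ j, v.right j ∈ U ↔ j ∈ U) (x : Torus ι) :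
    cWeight t τ U (v • x) = cWeight t τ U x := by
  rw [cWeight, cWeight, norm_cFun_smul hU]

lemma cWeight_univ_smul (v : SignedPerm ι) (x : Torus ι) :
    cWeight t τ univ (v • x) = cWeight t τ univ x :=
  cWeight_smul (by simp) x

lemma conj_cFun_mul_conj_cFun_inv (ht : |t| < 1) (hτ : ∀ r, |τ r| < 1) (hSU : S ⊆ U)
    (hx : IsGeneric x) :
    conj (cFun t τ S x) * conj (cFun t τ U x)⁻¹ =
      conj (∏ j ∈ U \ S, shortInv τ (e (x j))) := by
  rw [← map_mul, cFun, cFun, ← prod_sdiff hSU]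
  simp_rw [← shortFactor_inv, prod_inv_distrib]
  have hlong := longC_ne_zero ht hx
  have hshort (T : Finset ι) : ∏ j ∈ T, shortFactor τ (x j) ≠ 0 :=
    prod_ne_zero_iff.mpr fun j _ => shortFactor_ne_zero hτ (hx.two_smul_ne_zero j)
  congr 1
  field_simp [hshort]

lemma exists_shortFactor_smul_mul_inv (hτ : ∀ r, |τ r| < 1) (v : SignedPerm ι) (S : Finset ι)
    (a : ι) :
    ∃ R : ℂ → ℂ, DifferentiableOn ℂ R (Metric.closedBall 0 1) ∧ ∀ x : Torus ι, IsGeneric x →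
      (if v.right a ∈ S then shortFactor τ ((v • x) (v.right a)) else 1) *
        (shortFactor τ (x a))⁻¹ = e (x a) ^ (-poleOrder v S a) * R (e (x a)) := by
  by_cases ha : v.right a ∈ S
  · rcases Int.units_eq_one_or (v.left (v.right a)) with hv | hv
    · refine ⟨1, differentiableOn_const 1, fun x hx => ?_⟩
      have hne := shortFactor_ne_zero hτ (hx.two_smul_ne_zero a)
      simp [poleOrder, ha, hv, signedPerm_smul_apply_right, hne]
    · refine ⟨shortReflection τ, differentiableOn_shortReflection hτ, fun x hx => ?_⟩
      simpa [poleOrder, ha, hv, signedPerm_smul_apply_right] using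
        shortFactor_neg_mul_inv (hx.two_smul_ne_zero a)
  · refine ⟨shortInv τ, differentiableOn_shortInv hτ, fun x _ => ?_⟩
    simp [poleOrder, ha, shortFactor_inv]

lemma exists_extendsAlong_cFun_smul_mul_inv (ht : |t| < 1) (hτ : ∀ r, |τ r| < 1)
    (hω : Dominant ω) (v : SignedPerm ι) (S : Finset ι) :
    ∃ F F₀, ExtendsAlong ω F F₀ ∧ ∀ x : Torus ι, IsGeneric x →
      cFun t τ S (v • x) * (cFun t τ univ x)⁻¹ = e (pairing (-poleOrder v S) x) * F x := by
  obtain ⟨K, K₀, hK, hlong⟩ := exists_extendsAlong_longC_smul ht hω v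
  choose R hR hshort using exists_shortFactor_smul_mul_inv hτ v S
  refine ⟨_, _, hK.mul (ExtendsAlong.prod (s := univ) fun a _ =>
    ExtendsAlong.comp_coord (hR a) (hω.nonneg a)), fun x hx => ?_⟩
  have hcoords : (∏ j ∈ S, shortFactor τ ((v • x) j)) * (∏ a, shortFactor τ (x a))⁻¹ =
      e (pairing (-poleOrder v S) x) * ∏ a, R a (e (x a)) := by
    rw [← Fintype.prod_ite_mem, ← Equiv.prod_comp v.right, ← prod_inv_distrib, ← prod_mul_distrib,
      e_pairing, ← prod_mul_distrib]
    exact prod_congr rfl fun a _ => hshort a x hx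
  calc cFun t τ S (v • x) * (cFun t τ univ x)⁻¹
      = K x * (longC t x * (longC t x)⁻¹) *
          ((∏ j ∈ S, shortFactor τ ((v • x) j)) * (∏ a, shortFactor τ (x a))⁻¹) := by
        rw [cFun, cFun, hlong, mul_inv]
        ring
    _ = e (pairing (-poleOrder v S) x) * (K x * ∏ a, R a (e (x a))) := by
        rw [mul_inv_cancel₀ (longC_ne_zero ht hx), hcoords]
        ring

/-- The term `C(x) e^{-i⟨λ, x⟩}` of a Hall–Littlewood sum, with `C = cFun S`. -/
def hlTerm (t : ℝ) (τ : Fin 4 → ℝ) (S : Finset ι) (lam : ι → ℤ) (x : Torus ι) : ℂ :=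
  cFun t τ S x * e (-pairing lam x)

/-- The sum of `hlTerm` over the hyperoctahedral group. For `S = posSupport lam` it is the
Hall–Littlewood function up to normalization. -/
def hlSum (t : ℝ) (τ : Fin 4 → ℝ) (S : Finset ι) (lam : ι → ℤ) (x : Torus ι) : ℂ :=
  ∑ v : SignedPerm ι, hlTerm t τ S lam (v • x)

lemma exists_extendsAlong_hlTerm_mul_hlTerm_smul (ht : |t| < 1) (hτ : ∀ r, |τ r| < 1)
    {lam : ι → ℤ} (hlam : Dominant lam) (mu : ι → ℤ) (v : SignedPerm ι)
    (S : Finset ι) (hN : 0 ≤ pairing (lam - v⁻¹ • mu - poleOrder v S) lam) :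
    ∃ F F₀, ExtendsAlong lam F F₀ ∧
      (0 < pairing (lam - v⁻¹ • mu - poleOrder v S) lam → F₀ = 0) ∧
      ∀ x : Torus ι, IsGeneric x → conj (hlTerm t τ (posSupport lam) lam x) *
        hlTerm t τ S mu (v • x) * cWeight t τ univ x = F x := by
  obtain ⟨F, F₀, hF, hratio⟩ := exists_extendsAlong_cFun_smul_mul_inv ht hτ hlam v S
  have hzero : ∀ j ∈ univ \ posSupport lam, lam j = 0 := fun j hj =>
    (mem_compl_posSupport hlam.nonneg).mp hj
  obtain ⟨G₀, hG, hG0⟩ :=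
    ((extendsAlong_conj_prod_shortInv hτ hzero).mul hF).exists_mul_character hN
  refine ⟨_, G₀, hG, hG0, fun x hx => ?_⟩
  have hchar : e (pairing (lam - v⁻¹ • mu - poleOrder v S) x) =
      conj (e (-pairing lam x)) * e (-pairing mu (v • x)) * e (pairing (-poleOrder v S) x) := by
    rw [conj_e, neg_neg, pairing_smul, ← e_add, ← e_add, ← pairing_neg_left,
      ← pairing_add_left, ← pairing_add_left, sub_eq_add_neg, sub_eq_add_neg]
  calc conj (hlTerm t τ (posSupport lam) lam x) * hlTerm t τ S mu (v • x) * cWeight t τ univ x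
      = (conj (e (-pairing lam x)) * e (-pairing mu (v • x))) *
        (conj (cFun t τ (posSupport lam) x) * conj (cFun t τ univ x)⁻¹) *
        (cFun t τ S (v • x) * (cFun t τ univ x)⁻¹) := by
        rw [cWeight_eq, hlTerm, hlTerm, map_mul]
        ring
    _ = _ := by
        rw [conj_cFun_mul_conj_cFun_inv ht hτ (subset_univ _) hx, hratio x hx, hchar]
        ring

lemma sub_comp_le_sub_inv_smul_sub_poleOrder {mu : ι → ℤ} (hmu : 0 ≤ mu) (lam : ι → ℤ)
    (v : SignedPerm ι) (a : ι) :
    lam a - mu (v.right a) ≤ (lam - v⁻¹ • mu - poleOrder v (posSupport mu)) a := by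
  have hmu_a : 0 ≤ mu (v.right a) := hmu _
  simp only [Pi.sub_apply, signedPerm_inv_smul_apply, poleOrder, posSupport, mem_filter_univ,
    smul_eq_mul]
  rcases Int.units_eq_one_or (v.left (v.right a)) with hv | hv
  · simp [hv, show (1 : ℤˣ) ≠ -1 by decide]
  · simp only [hv, and_true, Units.val_neg, Units.val_one]
    split_ifs <;> lia

lemma sum_sq_sub_comp_le_two_mul_pairing {lam mu : ι → ℤ} (hlam : 0 ≤ lam) (hmu : 0 ≤ mu)
    (hle : pairing mu mu ≤ pairing lam lam) (v : SignedPerm ι) :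
    ∑ a, (lam a - mu (v.right a)) ^ 2 ≤
      2 * pairing (lam - v⁻¹ • mu - poleOrder v (posSupport mu)) lam := by
  have hperm : ∑ a, mu (v.right a) * mu (v.right a) = ∑ a, mu a * mu a :=
    Equiv.sum_comp v.right fun a => mu a * mu a
  simp only [pairing_apply, smul_eq_mul] at hle ⊢
  calc ∑ a, (lam a - mu (v.right a)) ^ 2
      = 2 * ∑ a, (lam a - mu (v.right a)) * lam a +
          (∑ a, mu (v.right a) * mu (v.right a) - ∑ a, lam a * lam a) := by
        rw [mul_sum, ← sum_sub_distrib, ← sum_add_distrib]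
        exact sum_congr rfl fun a _ => by ring
    _ ≤ 2 * ∑ a, (lam a - mu (v.right a)) * lam a := by linarith
    _ ≤ _ := by
        gcongr with a
        · exact hlam a
        · exact sub_comp_le_sub_inv_smul_sub_poleOrder hmu lam v a

lemma pairing_sub_inv_smul_sub_poleOrder_nonneg {lam mu : ι → ℤ} (hlam : 0 ≤ lam) (hmu : 0 ≤ mu)
    (hle : pairing mu mu ≤ pairing lam lam) (v : SignedPerm ι) :
    0 ≤ pairing (lam - v⁻¹ • mu - poleOrder v (posSupport mu)) lam := by
  have hsq := sum_sq_sub_comp_le_two_mul_pairing hlam hmu hle v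
  have : 0 ≤ ∑ a, (lam a - mu (v.right a)) ^ 2 := sum_nonneg fun a _ => sq_nonneg _
  lia

lemma integrable_conj_hlTerm_mul_hlTerm_smul (ht : |t| < 1) (hτ : ∀ r, |τ r| < 1)
    {lam : ι → ℤ} (hlam : Dominant lam) (mu : ι → ℤ) (v : SignedPerm ι) (S : Finset ι)
    (hN : 0 ≤ pairing (lam - v⁻¹ • mu - poleOrder v S) lam) :
    Integrable fun x : Torus ι => conj (hlTerm t τ (posSupport lam) lam x) *
      hlTerm t τ S mu (v • x) * cWeight t τ univ x := by
  obtain ⟨F, F₀, hF, -, heq⟩ :=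
    exists_extendsAlong_hlTerm_mul_hlTerm_smul ht hτ hlam mu v S hN
  exact (hF.continuous.integrable_of_hasCompactSupport
    (HasCompactSupport.of_compactSpace _)).congr (ae_isGeneric.mono fun x hx => (heq x hx).symm)

lemma integral_conj_hlTerm_mul_hlTerm_smul_eq_zero (ht : |t| < 1) (hτ : ∀ r, |τ r| < 1)
    {lam : ι → ℤ} (hlam : Dominant lam) (mu : ι → ℤ) (v : SignedPerm ι) (S : Finset ι)
    (hN : 0 < pairing (lam - v⁻¹ • mu - poleOrder v S) lam) :
    ∫ x : Torus ι, conj (hlTerm t τ (posSupport lam) lam x) *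
      hlTerm t τ S mu (v • x) * cWeight t τ univ x = 0 := by
  obtain ⟨F, F₀, hF, hF0, heq⟩ :=
    exists_extendsAlong_hlTerm_mul_hlTerm_smul ht hτ hlam mu v S hN.le
  rw [integral_congr_ae (ae_isGeneric.mono heq), hF.integral_eq, hF0 hN]
  exact integral_zero _ _

theorem integrable_conj_hlSum_mul_hlSum (ht : |t| < 1) (hτ : ∀ r, |τ r| < 1) {lam : ι → ℤ}
    (hlam : Dominant lam) :
    Integrable fun x : Torus ι => conj (hlSum t τ (posSupport lam) lam x) *
      hlSum t τ (posSupport lam) lam x * cWeight t τ univ x := by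
  simp only [hlSum, map_sum]
  exact integrable_sum_smul_mul_sum_smul_mul
    (f := fun x => conj (hlTerm t τ (posSupport lam) lam x)) cWeight_univ_smul
    fun v => integrable_conj_hlTerm_mul_hlTerm_smul ht hτ hlam lam v _
      (pairing_sub_inv_smul_sub_poleOrder_nonneg hlam.nonneg hlam.nonneg le_rfl v)

end HallLittlewoodSum

section Orthogonality

variable {n : ℕ} {t : ℝ} {τ : Fin 4 → ℝ} {lam mu : Fin n → ℤ}

lemma pairing_sub_inv_smul_sub_poleOrder_pos (hlam : Dominant lam) (hmu : Dominant mu)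
    (hle : pairing mu mu ≤ pairing lam lam) (hne : lam ≠ mu) (v : SignedPerm (Fin n)) :
    0 < pairing (lam - v⁻¹ • mu - poleOrder v (posSupport mu)) lam := by
  have hsq := sum_sq_sub_comp_le_two_mul_pairing hlam.nonneg hmu.nonneg hle v
  have hperm : lam ≠ mu ∘ v.right := fun h => hne <| h.trans <|
    Tuple.unique_antitone (h ▸ hlam.antitone) (τ := 1) hmu.antitone
  obtain ⟨a, ha⟩ := Function.ne_iff.mp hperm
  have : 0 < ∑ a, (lam a - mu (v.right a)) ^ 2 := sum_pos' (fun a _ => sq_nonneg _)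
    ⟨a, mem_univ a, sq_pos_iff.mpr (sub_ne_zero.mpr ha)⟩
  lia

theorem integral_conj_hlSum_mul_hlSum_eq_zero (ht : |t| < 1) (hτ : ∀ r, |τ r| < 1)
    (hlam : Dominant lam) (hmu : Dominant mu) (hne : lam ≠ mu) :
    ∫ x : Torus (Fin n), conj (hlSum t τ (posSupport lam) lam x) *
      hlSum t τ (posSupport mu) mu x * cWeight t τ univ x = 0 := by
  wlog hle : pairing mu mu ≤ pairing lam lam generalizing lam mu
  · have hswap := congrArg conj (this hmu hlam hne.symm (le_of_not_ge hle))
    rw [map_zero, ← integral_conj] at hswap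
    simpa [conj_cWeight, mul_comm] using hswap
  have hpos := pairing_sub_inv_smul_sub_poleOrder_pos hlam hmu hle hne
  simp only [hlSum, map_sum]
  rw [integral_sum_smul_mul_sum_smul_mul
    (f := fun x => conj (hlTerm t τ (posSupport lam) lam x)) cWeight_univ_smul
    fun v => integrable_conj_hlTerm_mul_hlTerm_smul ht hτ hlam mu v _ (hpos v).le,
    sum_eq_zero fun v _ => integral_conj_hlTerm_mul_hlTerm_smul_eq_zero ht hτ hlam mu v _ (hpos v),
    mul_zero]

end Orthogonality

/-! ### Hall–Littlewood sums do not vanish -/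

section NonVanishing

lemma exists_strictAnti_pos (ι : Type*) [Finite ι] [LinearOrder ι] :
    ∃ ω : ι → ℤ, StrictAnti ω ∧ ∀ j, 0 < ω j := by
  have := Fintype.ofFinite ι
  refine ⟨fun j => #{k | j ≤ k}, fun j k hjk => ?_, fun j => ?_⟩
  · refine Nat.cast_lt.mpr (card_lt_card (ssubset_iff_of_subset ?_ |>.mpr ⟨j, by simp, by simpa⟩))
    exact monotone_filter_right _ fun _ _ => hjk.le.trans
  · exact Nat.cast_pos.mpr (card_pos.mpr ⟨j, by simp⟩)

variable {ι : Type*} [Fintype ι] [LinearOrder ι] {t : ℝ} {τ : Fin 4 → ℝ} {lam : ι → ℤ}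
  {U : Finset ι}

lemma integrable_longC_inv (ht : |t| < 1) : Integrable fun x : Torus ι => (longC t x)⁻¹ := by
  obtain ⟨ω, hω, hω0⟩ := exists_strictAnti_pos ι
  exact (extendsAlong_longC_inv ht hω hω0).continuous.integrable_of_hasCompactSupport
    (HasCompactSupport.of_compactSpace _)

lemma integral_longC_inv_ne_zero (ht : |t| < 1) : ∫ x : Torus ι, (longC t x)⁻¹ ≠ 0 := by
  obtain ⟨ω, hω, hω0⟩ := exists_strictAnti_pos ι
  rw [(extendsAlong_longC_inv ht hω hω0).integral_eq]
  simp [measureReal_def, volume_pi, Measure.pi_univ, Real.pi_ne_zero,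
    Real.pi_nonneg]

-- Integrating against `‖longC‖⁻²` gives each summand the same nonzero integral.
lemma sum_longC_smul_not_ae_zero (ht : |t| < 1) (H : Subgroup (SignedPerm ι)) [Fintype H] :
    ¬ ∀ᵐ x : Torus ι, ∑ v : H, longC t (v • x) = 0 := by
  intro hzero
  let f : Torus ι → ℂ := fun x => longC t x * cWeight t 0 ∅ x
  have hf : (fun x => conj (longC t x)⁻¹) =ᵐ[volume] f := ae_isGeneric.mono fun x hx => by
    simp only [f, cWeight_eq, cFun_empty]
    rw [mul_left_comm, mul_inv_cancel₀ (longC_ne_zero ht hx), mul_one]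
  have hint : Integrable f :=
    (conjCLE.toContinuousLinearMap.integrable_comp (integrable_longC_inv ht)).congr hf
  have hsmul (v : H) (x : Torus ι) : f (v • x) = longC t (v • x) * cWeight t 0 ∅ x :=
    congrArg (longC t (v • x) * ·) (cWeight_smul (v := v.1) (by simp) x)
  have hint_smul (v : H) : Integrable fun x => f (v • x) :=
    (measurePreserving_smul v volume).integrable_comp_of_integrable hint
  have hsum : ∫ x, ∑ v : H, f (v • x) = Fintype.card H * ∫ x, f x := by
    rw [integral_finsetSum _ fun v _ => hint_smul v]
    simp [integral_smul_eq_self]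
  have hvanish : ∫ x, ∑ v : H, f (v • x) = 0 := integral_eq_zero_of_ae <| hzero.mono fun x hx => by
    simp only [hsmul, ← sum_mul, hx, zero_mul, Pi.zero_apply]
  rw [hvanish, ← integral_congr_ae hf, integral_conj] at hsum
  simp [integral_longC_inv_ne_zero ht] at hsum

lemma integral_conj_mul_self_mul_cWeight_ne_zero (ht : |t| < 1) (hτ : ∀ r, |τ r| < 1)
    {B : Torus ι → ℂ} (hB : ¬ ∀ᵐ x, B x = 0)
    (hint : Integrable fun x => conj (B x) * B x * cWeight t τ U x) :
    ∫ x, conj (B x) * B x * cWeight t τ U x ≠ 0 := by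
  have hreal (x : Torus ι) : conj (B x) * B x * cWeight t τ U x =
      ((‖B x‖ ^ 2 * (‖cFun t τ U x‖ ^ 2)⁻¹ : ℝ) : ℂ) := by
    rw [cWeight, ← normSq_eq_conj_mul_self, normSq_eq_norm_sq, ofReal_mul]
  simp only [hreal] at hint ⊢
  have hint_real : Integrable fun x => ‖B x‖ ^ 2 * (‖cFun t τ U x‖ ^ 2)⁻¹ := hint.re
  rw [integral_complex_ofReal, ofReal_ne_zero]
  intro hzero
  rw [integral_eq_zero_iff_of_nonneg (fun x => by positivity) hint_real] at hzero
  refine hB ?_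
  filter_upwards [hzero, ae_isGeneric] with x hx hgen
  simpa [cFun_ne_zero ht hτ hgen] using hx

lemma longC_mul_cFun_inv {x : Torus ι} (ht : |t| < 1) (hx : IsGeneric x) :
    longC t x * (cFun t τ U x)⁻¹ = ∏ j ∈ U, shortInv τ (e (x j)) := by
  rw [cFun, mul_inv, mul_inv_cancel_left₀ (longC_ne_zero ht hx), ← prod_inv_distrib]
  simp only [shortFactor_inv]

lemma exists_extendsAlong_conj_cFun_mul_longC_smul (ht : |t| < 1) (hτ : ∀ r, |τ r| < 1)
    (hlam : Dominant lam) (v : SignedPerm ι) :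
    ∃ G₀ : Torus ι → ℂ, ∀ U, (posSupport lam)ᶜ ⊆ U → ∃ F, ExtendsAlong lam F G₀ ∧
      ∀ x : Torus ι, IsGeneric x → conj (cFun t τ (U ∩ posSupport lam) x) * longC t (v • x) *
        cWeight t τ U x = F x := by
  obtain ⟨K, K₀, hK, hlong⟩ := exists_extendsAlong_longC_smul ht hlam v
  refine ⟨fun x => conj (∏ j ∈ (posSupport lam)ᶜ, shortInv τ (e (x j))) *
    (K₀ x * ∏ j ∈ (posSupport lam)ᶜ, shortInv τ (e (x j))), fun U hU => ?_⟩
  have hF := (extendsAlong_conj_prod_shortInv hτ fun j => (mem_compl_posSupport hlam.nonneg).mp).mul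
    (hK.mul (ExtendsAlong.prod (s := U) fun a _ =>
      ExtendsAlong.comp_coord (differentiableOn_shortInv hτ) (hlam.nonneg a)))
  have hprod (x : Torus ι) : ∏ a ∈ U, shortInv τ (if lam a = 0 then e (x a) else 0) =
      ∏ a ∈ (posSupport lam)ᶜ, shortInv τ (e (x a)) := by
    rw [← prod_subset hU fun a _ ha => by
      simp [mt (mem_compl_posSupport hlam.nonneg).mpr ha, shortInv]]
    exact prod_congr rfl fun a ha => by rw [if_pos ((mem_compl_posSupport hlam.nonneg).mp ha)]
  simp only [hprod] at hF
  refine ⟨_, hF, fun x hx => ?_⟩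
  have hsdiff : U \ (U ∩ posSupport lam) = (posSupport lam)ᶜ := by
    rw [sdiff_inter_self_left, sdiff_eq_inter_compl, inter_eq_right.mpr hU]
  rw [← hsdiff, ← conj_cFun_mul_conj_cFun_inv ht hτ inter_subset_left hx, cWeight_eq, hlong,
    ← longC_mul_cFun_inv ht hx]
  ring

lemma integrable_conj_longC_mul_longC_smul (ht : |t| < 1) (hτ : ∀ r, |τ r| < 1)
    (hlam : Dominant lam) (v : SignedPerm ι) :
    Integrable fun x : Torus ι =>
      conj (longC t x) * longC t (v • x) * cWeight t τ (posSupport lam)ᶜ x := by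
  obtain ⟨G₀, h⟩ := exists_extendsAlong_conj_cFun_mul_longC_smul ht hτ hlam v
  obtain ⟨F, hF, heq⟩ := h _ subset_rfl
  simp only [inter_comm (posSupport lam)ᶜ, inter_compl, cFun_empty] at heq
  exact (hF.continuous.integrable_of_hasCompactSupport
    (HasCompactSupport.of_compactSpace _)).congr (ae_isGeneric.mono fun x hx => (heq x hx).symm)

lemma integral_conj_cFun_mul_longC_smul_eq (ht : |t| < 1) (hτ : ∀ r, |τ r| < 1)
    (hlam : Dominant lam) (v : SignedPerm ι) {V : Finset ι} (hU : (posSupport lam)ᶜ ⊆ U)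
    (hV : (posSupport lam)ᶜ ⊆ V) :
    ∫ x : Torus ι, conj (cFun t τ (U ∩ posSupport lam) x) * longC t (v • x) * cWeight t τ U x =
      ∫ x : Torus ι, conj (cFun t τ (V ∩ posSupport lam) x) * longC t (v • x) *
        cWeight t τ V x := by
  obtain ⟨G₀, h⟩ := exists_extendsAlong_conj_cFun_mul_longC_smul ht hτ hlam v
  obtain ⟨F, hF, hFeq⟩ := h U hU
  obtain ⟨G, hG, hGeq⟩ := h V hV
  rw [integral_congr_ae (ae_isGeneric.mono hFeq), integral_congr_ae (ae_isGeneric.mono hGeq),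
    hF.integral_eq, hG.integral_eq]

lemma pairing_sub_inv_smul_sub_poleOrder_empty_nonneg (lam : ι → ℤ) (v : SignedPerm ι) :
    0 ≤ pairing (lam - v⁻¹ • lam - poleOrder v ∅) lam := by
  have hsq := two_mul_pairing_sub_inv_smul lam v
  have : 0 ≤ ∑ j, (lam j - (v⁻¹ • lam) j) ^ 2 := sum_nonneg fun j _ => sq_nonneg _
  rw [poleOrder_empty, sub_zero]
  lia

lemma pairing_sub_inv_smul_sub_poleOrder_empty_pos {v : SignedPerm ι}
    (hv : v ∉ MulAction.stabilizer (SignedPerm ι) lam) :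
    0 < pairing (lam - v⁻¹ • lam - poleOrder v ∅) lam := by
  have hsq := two_mul_pairing_sub_inv_smul lam v
  obtain ⟨a, ha⟩ := Function.ne_iff.mp fun h : lam = v⁻¹ • lam =>
    hv (inv_mem_iff.mp (MulAction.mem_stabilizer_iff.mpr h.symm))
  have : 0 < ∑ j, (lam j - (v⁻¹ • lam) j) ^ 2 := sum_pos' (fun a _ => sq_nonneg _)
    ⟨a, mem_univ a, sq_pos_iff.mpr (sub_ne_zero.mpr ha)⟩
  rw [poleOrder_empty, sub_zero]
  lia

lemma right_mem_compl_posSupport_iff (hlam : 0 ≤ lam) {v : SignedPerm ι}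
    (hv : v ∈ MulAction.stabilizer (SignedPerm ι) lam) (j : ι) :
    v.right j ∈ (posSupport lam)ᶜ ↔ j ∈ (posSupport lam)ᶜ := by
  have h := signedPerm_smul_apply_right v lam j
  rw [MulAction.mem_stabilizer_iff.mp hv] at h
  rw [mem_compl_posSupport hlam, mem_compl_posSupport hlam, h]
  simp

lemma integral_conj_hlTerm_mul_hlTerm_empty_smul (ht : |t| < 1) (hτ : ∀ r, |τ r| < 1)
    (hlam : Dominant lam) {v : SignedPerm ι}
    (hv : v ∈ MulAction.stabilizer (SignedPerm ι) lam) :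
    ∫ x : Torus ι, conj (hlTerm t τ (posSupport lam) lam x) * hlTerm t τ ∅ lam (v • x) *
      cWeight t τ univ x =
    ∫ x : Torus ι, conj (longC t x) * longC t (v • x) * cWeight t τ (posSupport lam)ᶜ x := by
  have hchar (x : Torus ι) : conj (e (-pairing lam x)) * e (-pairing lam (v • x)) = 1 := by
    rw [pairing_smul, MulAction.mem_stabilizer_iff.mp (inv_mem hv), ← normSq_eq_conj_mul_self,
      normSq_eq_norm_sq, norm_e, one_pow, ofReal_one]
  have h := integral_conj_cFun_mul_longC_smul_eq ht hτ hlam v (subset_univ _) subset_rfl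
  rw [univ_inter, inter_comm (posSupport lam)ᶜ, inter_compl] at h
  simp only [cFun_empty] at h
  rw [← h]
  congr 1 with x
  rw [hlTerm, hlTerm, cFun_empty, map_mul, mul_mul_mul_comm, hchar, mul_one]

lemma sum_integral_conj_hlTerm_mul_hlTerm_empty_smul (ht : |t| < 1) (hτ : ∀ r, |τ r| < 1)
    (hlam : Dominant lam) [Fintype (MulAction.stabilizer (SignedPerm ι) lam)] :
    ∑ v : SignedPerm ι, ∫ x : Torus ι, conj (hlTerm t τ (posSupport lam) lam x) *
      hlTerm t τ ∅ lam (v • x) * cWeight t τ univ x =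
    ∑ v : MulAction.stabilizer (SignedPerm ι) lam, ∫ x : Torus ι,
      conj (longC t x) * longC t (v • x) * cWeight t τ (posSupport lam)ᶜ x := by
  classical
  rw [← sum_filter_of_ne (p := (· ∈ MulAction.stabilizer (SignedPerm ι) lam)) fun v _ hne =>
    not_imp_comm.mp (fun hv => integral_conj_hlTerm_mul_hlTerm_smul_eq_zero ht hτ hlam lam v ∅
      (pairing_sub_inv_smul_sub_poleOrder_empty_pos hv)) hne,
    sum_subtype _ fun v => mem_filter_univ v]
  exact sum_congr rfl fun v _ => integral_conj_hlTerm_mul_hlTerm_empty_smul ht hτ hlam v.2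

theorem integral_conj_hlSum_mul_hlSum_empty_ne_zero (ht : |t| < 1) (hτ : ∀ r, |τ r| < 1)
    (hlam : Dominant lam) :
    ∫ x : Torus ι, conj (hlSum t τ (posSupport lam) lam x) * hlSum t τ ∅ lam x *
      cWeight t τ univ x ≠ 0 := by
  classical
  let H := MulAction.stabilizer (SignedPerm ι) lam
  have hterms := integral_sum_smul_mul_sum_smul_mul
    (f := fun x => conj (hlTerm t τ (posSupport lam) lam x)) (g := hlTerm t τ ∅ lam)
    cWeight_univ_smul fun v => integrable_conj_hlTerm_mul_hlTerm_smul ht hτ hlam lam v ∅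
      (pairing_sub_inv_smul_sub_poleOrder_empty_nonneg lam v)
  have hint (v : H) : Integrable fun x : Torus ι =>
      conj (longC t x) * longC t (v • x) * cWeight t τ (posSupport lam)ᶜ x :=
    integrable_conj_longC_mul_longC_smul ht hτ hlam v.1
  have hweight (v : H) (x : Torus ι) :
      cWeight t τ (posSupport lam)ᶜ (v • x) = cWeight t τ (posSupport lam)ᶜ x :=
    cWeight_smul (v := v.1) (right_mem_compl_posSupport_iff hlam.nonneg v.2) x
  have hsquare := integral_sum_smul_mul_sum_smul_mul (f := fun x => conj (longC t x)) hweight hint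
  have hne := integral_conj_mul_self_mul_cWeight_ne_zero ht hτ
    (B := fun x => ∑ v : H, longC t (v • x)) (sum_longC_smul_not_ae_zero ht H)
    (by
      simpa only [map_sum] using integrable_sum_smul_mul_sum_smul_mul
        (f := fun x => conj (longC t x)) hweight hint)
  simp only [map_sum] at hne
  simp only [hlSum, map_sum]
  rw [hterms, sum_integral_conj_hlTerm_mul_hlTerm_empty_smul ht hτ hlam]
  exact mul_ne_zero (by simp) (right_ne_zero_of_mul (hsquare ▸ hne))

theorem hlSum_not_ae_zero (ht : |t| < 1) (hτ : ∀ r, |τ r| < 1) (hlam : Dominant lam) :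
    ¬ ∀ᵐ x : Torus ι, hlSum t τ (posSupport lam) lam x = 0 := fun hzero =>
  integral_conj_hlSum_mul_hlSum_empty_ne_zero ht hτ hlam <| integral_eq_zero_of_ae <|
    hzero.mono fun x hx => by simp [hx]

end NonVanishing

/-! ### From the torus to the box -/

section Box

variable {n : ℕ}

/-- The covering map `ℝ^n → (ℝ / 2πℤ)^n`. -/
def toTorus (ξ : Fin n → ℝ) : Torus (Fin n) := fun j => ξ j

lemma measurePreserving_toTorus :
    MeasurePreserving (toTorus (n := n)) (volume.restrict (box n)) volume := by
  have hbox : (volume : Measure (Fin n → ℝ)).restrict (box n) =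
      Measure.pi fun _ => volume.restrict (Set.Ioc 0 (0 + 2 * π)) := by
    simp_rw [box, volume_pi, Measure.restrict_pi_pi, zero_add,
      ← restrict_Ioc_eq_restrict_Icc]
  rw [hbox]
  exact measurePreserving_pi _ _ fun _ => AddCircle.measurePreserving_mk (2 * π) 0

lemma toTorus_smul (v : SignedPerm (Fin n)) (ξ : Fin n → ℝ) :
    toTorus (v • ξ) = v • toTorus ξ := rfl

/-- The signs `±1`, encoded by `Bool` as in `act`. -/
def boolEquivUnits : Bool ≃ ℤˣ where
  toFun b := if b then -1 else 1
  invFun u := decide (u = -1)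
  left_inv := by decide
  right_inv := by decide

/-- The indexing of signed permutations used by `act`. A permutation is sent to its inverse, since
`act` permutes coordinates contravariantly. -/
def signedPermEquiv (n : ℕ) : Equiv.Perm (Fin n) × (Fin n → Bool) ≃ SignedPerm (Fin n) :=
  ((Equiv.prodComm _ _).trans
    ((Equiv.arrowCongr (Equiv.refl _) boolEquivUnits).prodCongr (Equiv.inv _))).trans
    SemidirectProduct.equivProd.symm

lemma act_ofReal (w : Equiv.Perm (Fin n) × (Fin n → Bool)) (ξ : Fin n → ℝ) :
    act n w (fun j => (ξ j : ℂ)) = fun j => ((signedPermEquiv n w • ξ) j : ℂ) := by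
  ext j
  cases h : w.2 j <;> simp [act, h, signedPermEquiv, boolEquivUnits, signedPerm_smul_apply]

lemma exp_pair_quotient_eq_rootFactor_mul (t : ℝ) (ξ : Fin n → ℝ) (j k : Fin n) :
    ((1 - t * exp (I * (ξ j - ξ k))) * (1 - t * exp (I * (ξ j + ξ k)))) /
      ((1 - exp (I * (ξ j - ξ k))) * (1 - exp (I * (ξ j + ξ k)))) =
    rootFactor t (toTorus ξ j - toTorus ξ k) * rootFactor t (toTorus ξ j + toTorus ξ k) := by
  have hsub : exp (I * (ξ j - ξ k)) = e (toTorus ξ j - toTorus ξ k) := by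
    rw [← ofReal_sub, ← e_coe]; rfl
  have hadd : exp (I * (ξ j + ξ k)) = e (toTorus ξ j + toTorus ξ k) := by
    rw [← ofReal_add, ← e_coe]; rfl
  rw [hsub, hadd, mul_div_mul_comm, rootFactor, rootFactor]

lemma exp_coord_quotient_eq_shortFactor (τ : Fin 4 → ℝ) (ξ : Fin n → ℝ) (j : Fin n) :
    ((1 - τ 0 * exp (I * ξ j)) * (1 - τ 1 * exp (I * ξ j)) * (1 - τ 2 * exp (I * ξ j)) *
      (1 - τ 3 * exp (I * ξ j))) / (1 - exp (2 * I * ξ j)) = shortFactor τ (toTorus ξ j) := by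
  have hsq : exp (2 * I * ξ j) = exp (I * ξ j) ^ 2 := by
    rw [← exp_nat_mul]; push_cast; ring_nf
  rw [shortFactor, Fin.prod_univ_four, hsq, ← e_coe]
  rfl

lemma prod_prod_ite_lt {M : Type*} [CommMonoid M] (f : Fin n → Fin n → M) :
    (∏ j, ∏ k, if j < k then f j k else 1) =
      ∏ p : Fin n × Fin n with p.1 < p.2, f p.1 p.2 := by
  rw [prod_filter, Fintype.prod_prod_type]

/-- `P_λ` at real points, with the parameters `t_r` collected in the vector `τ`. -/
def realP (t : ℝ) (τ : Fin 4 → ℝ) (lam : Fin n → ℤ) (ξ : Fin n → ℝ) : ℂ :=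
  P n t (τ 0) (τ 1) (τ 2) (τ 3) lam fun j => (ξ j : ℂ)

/-- `Δ` at real points, with the parameters `t_r` collected in the vector `τ`. -/
def realDlt (t : ℝ) (τ : Fin 4 → ℝ) (ξ : Fin n → ℝ) : ℂ :=
  Dlt n t (τ 0) (τ 1) (τ 2) (τ 3) fun j => (ξ j : ℂ)

/-- The normalization constant `c_λ`, with the parameters `t_r` collected in the vector `τ`. -/
def realCcf (t : ℝ) (τ : Fin 4 → ℝ) (lam : Fin n → ℤ) : ℂ :=
  ccf n t (τ 0) (τ 1) (τ 2) (τ 3) lam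

lemma Cf_ofReal (t : ℝ) (τ : Fin 4 → ℝ) (lam : Fin n → ℤ) (ξ : Fin n → ℝ) :
    Cf n t (τ 0) (τ 1) (τ 2) (τ 3) lam (fun j => (ξ j : ℂ)) =
      cFun t τ (posSupport lam) (toTorus ξ) := by
  simp_rw [Cf, exp_pair_quotient_eq_rootFactor_mul, exp_coord_quotient_eq_shortFactor]
  rw [prod_prod_ite_lt fun j k =>
      rootFactor t (toTorus ξ j - toTorus ξ k) * rootFactor t (toTorus ξ j + toTorus ξ k),
    ← prod_filter, cFun, longC, posSupport]

lemma realDlt_eq (t : ℝ) (τ : Fin 4 → ℝ) (ξ : Fin n → ℝ) :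
    realDlt t τ ξ = (cFun t τ univ (toTorus ξ))⁻¹ := by
  have hpair (j k : Fin n) := congrArg (·⁻¹) (exp_pair_quotient_eq_rootFactor_mul t ξ j k)
  have hshort (j : Fin n) := congrArg (·⁻¹) (exp_coord_quotient_eq_shortFactor τ ξ j)
  simp only [inv_div] at hpair hshort
  simp_rw [realDlt, Dlt, hpair, hshort, prod_prod_ite_lt fun j k =>
    (rootFactor t (toTorus ξ j - toTorus ξ k) * rootFactor t (toTorus ξ j + toTorus ξ k))⁻¹,
    prod_inv_distrib]
  rw [← mul_inv, cFun, longC]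

lemma exp_neg_I_mul_sum (lam : Fin n → ℤ) (ξ : Fin n → ℝ) :
    exp (-I * ∑ j, (lam j : ℂ) * ξ j) = e (-pairing lam (toTorus ξ)) := by
  have hcoe : -pairing lam (toTorus ξ) = ((-∑ j, lam j * ξ j : ℝ) : Angle) := by
    simp [pairing_apply, toTorus, ← zsmul_eq_mul]
  rw [hcoe, e_coe]
  push_cast
  rw [neg_mul, mul_neg]

lemma realP_eq (t : ℝ) (τ : Fin 4 → ℝ) (lam : Fin n → ℤ) (ξ : Fin n → ℝ) :
    realP t τ lam ξ = realCcf t τ lam * hlSum t τ (posSupport lam) lam (toTorus ξ) := by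
  simp_rw [realP, P, act_ofReal, Cf_ofReal, exp_neg_I_mul_sum, toTorus_smul]
  rw [hlSum, ← (signedPermEquiv n).sum_comp]
  rfl

end Box

/-! ### The normalization constant -/

section NormalizationConstant

variable {n : ℕ} {t : ℝ} {τ : Fin 4 → ℝ}

lemma tn_eq_pow (t : ℂ) (j : Fin n) : tn n t j = t ^ (n - 1 - (j : ℕ)) := by
  have hen : en n j = ((n - 1 - (j : ℕ) : ℕ) : ℤ) := by
    have hj := j.isLt
    rw [en]
    omega
  rw [tn, hen, zpow_natCast]

lemma norm_ofReal_pow_le_one (ht : |t| < 1) (m : ℕ) : ‖(t : ℂ) ^ m‖ ≤ 1 := by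
  rw [norm_pow, norm_real]
  exact pow_le_one₀ (norm_nonneg t) ht.le

lemma one_add_ofReal_pow_ne_zero (ht : |t| < 1) (m : ℕ) : 1 + (t : ℂ) ^ m ≠ 0 := by
  cases m with
  | zero => norm_num
  | succ m =>
    have h := one_sub_ofReal_mul_ne_zero ht (z := -(t : ℂ) ^ m)
      (by simpa using norm_ofReal_pow_le_one ht m)
    rwa [mul_neg, sub_neg_eq_add, ← pow_succ'] at h

lemma one_sub_ofReal_pow_succ_ne_zero (ht : |t| < 1) (m : ℕ) : 1 - (t : ℂ) ^ (m + 1) ≠ 0 := by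
  rw [pow_succ']
  exact one_sub_ofReal_mul_ne_zero ht (by simpa using norm_ofReal_pow_le_one ht m)

lemma one_sub_mul_mul_tn_ne_zero (ht : |t| < 1) {a b : ℝ} (ha : |a| < 1) (hb : |b| < 1)
    (j : Fin n) : 1 - (a : ℂ) * b * tn n t j ≠ 0 := by
  rw [mul_assoc, tn_eq_pow]
  refine one_sub_ofReal_mul_ne_zero ha ?_
  rw [mem_closedBall_zero_iff, norm_mul, norm_real]
  exact mul_le_one₀ hb.le (norm_nonneg _) (norm_ofReal_pow_le_one ht _)

lemma realCcf_ne_zero (ht : |t| < 1) (ht0 : t ≠ 0) (hτ : ∀ r, |τ r| < 1) (hτ0 : τ 0 ≠ 0)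
    (lam : Fin n → ℤ) : realCcf t τ lam ≠ 0 := by
  rw [realCcf, ccf]
  refine prod_ne_zero_iff.mpr fun j _ => div_ne_zero ?numerator
    (mul_ne_zero (mul_ne_zero ?power ?zeroPart) ?positivePart)
  case numerator =>
    exact mul_ne_zero (mul_ne_zero (zpow_ne_zero _ (ofReal_ne_zero.mpr hτ0))
      (zpow_ne_zero _ (ofReal_ne_zero.mpr ht0)))
      (by simpa using one_sub_ofReal_pow_succ_ne_zero ht 0)
  case power => exact mod_cast one_sub_ofReal_pow_succ_ne_zero ht j
  case zeroPart =>
    split_ifs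
    · rw [tn_eq_pow]
      exact one_add_ofReal_pow_ne_zero ht _
    · exact one_ne_zero
  case positivePart =>
    split_ifs
    · exact one_ne_zero
    · have hfactor (r : Fin 4) := one_sub_mul_mul_tn_ne_zero ht (hτ 0) (hτ r) j
      exact mul_ne_zero (mul_ne_zero (hfactor 1) (hfactor 2)) (hfactor 3)

end NormalizationConstant

/-! ### Orthogonal expansions in a Hilbert space -/

section OrthogonalExpansion

variable {𝕜 κ H : Type*} [RCLike 𝕜] [NormedAddCommGroup H] [InnerProductSpace 𝕜 H] {v : κ → H}

lemma summable_smul_of_pairwise_inner_eq_zero [CompleteSpace H]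
    (hv : Pairwise fun i j => inner 𝕜 (v i) (v j) = 0) {a : κ → 𝕜}
    (ha : Summable fun i => ‖a i‖ ^ 2 * ‖v i‖ ^ 2) : Summable fun i => a i • v i := by
  have hfamily : OrthogonalFamily 𝕜 (fun i => 𝕜 ∙ v i) fun i => (𝕜 ∙ v i).subtypeₗᵢ := by
    refine OrthogonalFamily.of_pairwise fun i j hij => ?_
    refine Submodule.isOrtho_span.mpr ?_
    rintro _ rfl _ rfl
    exact hv hij
  refine (hfamily.summable_iff_norm_sq_summable fun i =>
    ⟨a i • v i, Submodule.smul_mem _ _ (Submodule.mem_span_singleton_self _)⟩).mpr ?_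
  simpa only [Submodule.coe_norm, norm_smul, mul_pow] using ha

lemma inner_eq_of_hasSum_smul (hv : Pairwise fun i j => inner 𝕜 (v i) (v j) = 0) {a : κ → 𝕜}
    {F : H} (hF : HasSum (fun i => a i • v i) F) (i : κ) :
    inner 𝕜 (v i) F = a i * inner 𝕜 (v i) (v i) := by
  have hinner := hF.mapL (innerSL 𝕜 (v i))
  simp only [innerSL_apply_apply, inner_smul_right] at hinner
  exact hinner.unique (hasSum_single i fun j hj => by rw [hv hj.symm, mul_zero])

lemma exists_hasSum_smul_and_inner_eq [CompleteSpace H]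
    (hv : Pairwise fun i j => inner 𝕜 (v i) (v j) = 0) (hv0 : ∀ i, v i ≠ 0) {f : κ → 𝕜}
    (hf : Summable fun i => ‖f i‖ ^ 2 * (‖v i‖ ^ 2)⁻¹) :
    ∃ F : H, HasSum (fun i => (f i * ((‖v i‖ ^ 2)⁻¹ : ℝ)) • v i) F ∧
      ∀ i, inner 𝕜 (v i) F = f i := by
  have hsq (i : κ) : ‖v i‖ ^ 2 ≠ 0 := pow_ne_zero 2 (norm_ne_zero_iff.mpr (hv0 i))
  have hcoeff (i : κ) : ‖f i‖ ^ 2 * (‖v i‖ ^ 2)⁻¹ =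
      ‖f i * ((‖v i‖ ^ 2)⁻¹ : ℝ)‖ ^ 2 * ‖v i‖ ^ 2 := by
    rw [norm_mul, RCLike.norm_ofReal, abs_of_nonneg (by positivity), mul_pow]
    field_simp [hsq i]
  have hsum := (summable_smul_of_pairwise_inner_eq_zero hv (hf.congr hcoeff)).hasSum
  refine ⟨_, hsum, fun i => ?_⟩
  rw [inner_eq_of_hasSum_smul hv hsum, inner_self_eq_norm_sq_to_K, ← RCLike.ofReal_pow, mul_assoc,
    ← RCLike.ofReal_mul, inv_mul_cancel₀ (hsq i), RCLike.ofReal_one, mul_one]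

end OrthogonalExpansion

/-! ### Hall–Littlewood functions in the weighted `L²` space -/

section WeightedL2

lemma measurable_cFun {ι : Type*} [Fintype ι] [LinearOrder ι] (t : ℝ) (τ : Fin 4 → ℝ)
    (S : Finset ι) : Measurable (cFun t τ S) := by
  have he := continuous_e.measurable
  unfold cFun longC rootFactor shortFactor
  fun_prop

lemma measurable_hlSum {ι : Type*} [Fintype ι] [LinearOrder ι] (t : ℝ) (τ : Fin 4 → ℝ)
    (S : Finset ι) (lam : ι → ℤ) : Measurable (hlSum t τ S lam) := by
  have hterm : Measurable (hlTerm t τ S lam) := (measurable_cFun t τ S).mul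
    (continuous_e.comp (continuous_pairing lam).neg).measurable
  exact Finset.measurable_sum _ fun v _ => hterm.comp (measurable_const_smul v)

variable {n : ℕ} {t : ℝ} {τ : Fin 4 → ℝ} {lam mu : Fin n → ℤ}

lemma measurable_realP (t : ℝ) (τ : Fin 4 → ℝ) (lam : Fin n → ℤ) :
    Measurable (realP t τ lam) := by
  simp_rw [funext (realP_eq t τ lam)]
  exact ((measurable_hlSum t τ _ lam).comp measurePreserving_toTorus.measurable).const_mul _

lemma measurable_realDlt (t : ℝ) (τ : Fin 4 → ℝ) :
    Measurable (realDlt t τ : (Fin n → ℝ) → ℂ) := by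
  simp_rw [funext (realDlt_eq t τ)]
  exact ((measurable_cFun t τ univ).comp measurePreserving_toTorus.measurable).inv

lemma conj_realP_mul_realP_mul_norm_realDlt_sq (t : ℝ) (τ : Fin 4 → ℝ) (lam mu : Fin n → ℤ)
    (ξ : Fin n → ℝ) :
    conj (realP t τ mu ξ) * realP t τ lam ξ * (‖realDlt t τ ξ‖ ^ 2 : ℝ) =
      conj (realCcf t τ mu) * realCcf t τ lam *
        (conj (hlSum t τ (posSupport mu) mu (toTorus ξ)) *
          hlSum t τ (posSupport lam) lam (toTorus ξ) * cWeight t τ univ (toTorus ξ)) := by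
  rw [realP_eq, realP_eq, realDlt_eq, cWeight, norm_inv, inv_pow, map_mul]
  ring

lemma ofReal_norm_realP_mul_realDlt_sq (t : ℝ) (τ : Fin 4 → ℝ) (lam : Fin n → ℤ)
    (ξ : Fin n → ℝ) :
    ((‖realP t τ lam ξ * realDlt t τ ξ‖ ^ 2 : ℝ) : ℂ) =
      conj (realP t τ lam ξ) * realP t τ lam ξ * (‖realDlt t τ ξ‖ ^ 2 : ℝ) := by
  rw [norm_mul, mul_pow, ofReal_mul, ← normSq_eq_conj_mul_self, normSq_eq_norm_sq]

lemma integrable_norm_realP_mul_realDlt_sq (ht : |t| < 1) (hτ : ∀ r, |τ r| < 1)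
    (hlam : Dominant lam) :
    Integrable (fun ξ => ‖realP t τ lam ξ * realDlt t τ ξ‖ ^ 2) (volume.restrict (box n)) := by
  have hint := (measurePreserving_toTorus.integrable_comp_of_integrable
    (integrable_conj_hlSum_mul_hlSum ht hτ hlam)).const_mul
    (conj (realCcf t τ lam) * realCcf t τ lam)
  refine hint.re.congr (.of_forall fun ξ => ?_)
  simp only [Function.comp_apply, ← conj_realP_mul_realP_mul_norm_realDlt_sq,
    ← ofReal_norm_realP_mul_realDlt_sq]
  exact ofReal_re _

lemma realP_mul_realDlt_not_ae_zero (ht : |t| < 1) (ht0 : t ≠ 0) (hτ : ∀ r, |τ r| < 1)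
    (hτ0 : τ 0 ≠ 0) (hlam : Dominant lam) :
    ¬ ∀ᵐ ξ ∂volume.restrict (box n), realP t τ lam ξ * realDlt t τ ξ = 0 := by
  intro hzero
  refine hlSum_not_ae_zero ht hτ hlam ?_
  have hmeas : MeasurableSet {x | hlSum t τ (posSupport lam) lam x = 0} :=
    measurable_hlSum t τ _ lam (measurableSet_singleton 0)
  rw [← measurePreserving_toTorus.map_eq,
    ae_map_iff measurePreserving_toTorus.aemeasurable hmeas]
  filter_upwards [hzero, measurePreserving_toTorus.quasiMeasurePreserving.ae ae_isGeneric]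
    with ξ hξ hgeneric
  rw [realP_eq, realDlt_eq] at hξ
  simpa [realCcf_ne_zero ht ht0 hτ hτ0 lam, cFun_ne_zero ht hτ hgeneric] using hξ

lemma nInt_pos (ht : |t| < 1) (ht0 : t ≠ 0) (hτ : ∀ r, |τ r| < 1) (hτ0 : τ 0 ≠ 0)
    (hlam : Dominant lam) : 0 < nInt n t (τ 0) (τ 1) (τ 2) (τ 3) lam := by
  have hnonneg (ξ : Fin n → ℝ) : 0 ≤ ‖realP t τ lam ξ * realDlt t τ ξ‖ ^ 2 := sq_nonneg _
  refine (integral_nonneg hnonneg).lt_of_ne' fun hzero => ?_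
  refine realP_mul_realDlt_not_ae_zero ht ht0 hτ hτ0 hlam ?_
  filter_upwards [(integral_eq_zero_iff_of_nonneg hnonneg
    (integrable_norm_realP_mul_realDlt_sq ht hτ hlam)).mp hzero] with ξ hξ
  simpa using hξ

/-- The measure `|Δ|² dξ`, with the parameters `t_r` collected in the vector `τ`. -/
abbrev weightMeasure (n : ℕ) (t : ℝ) (τ : Fin 4 → ℝ) : Measure (Fin n → ℝ) :=
  wmeas n t (τ 0) (τ 1) (τ 2) (τ 3)

lemma weightMeasure_eq (n : ℕ) (t : ℝ) (τ : Fin 4 → ℝ) :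
    weightMeasure n t τ = (volume.restrict (box n)).withDensity
      fun ξ => ENNReal.ofReal (‖realDlt t τ ξ‖ ^ 2) := rfl

lemma measurable_ofReal_norm_realDlt_sq (t : ℝ) (τ : Fin 4 → ℝ) :
    Measurable fun ξ : Fin n → ℝ => ENNReal.ofReal (‖realDlt t τ ξ‖ ^ 2) :=
  ((measurable_realDlt t τ).norm.pow_const 2).ennreal_ofReal

lemma integral_weightMeasure (t : ℝ) (τ : Fin 4 → ℝ) (g : (Fin n → ℝ) → ℂ) :
    ∫ ξ, g ξ ∂weightMeasure n t τ = ∫ ξ in box n, g ξ * (‖realDlt t τ ξ‖ ^ 2 : ℝ) := by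
  rw [weightMeasure_eq, integral_withDensity_eq_integral_toReal_smul
    (measurable_ofReal_norm_realDlt_sq t τ) (.of_forall fun _ => ENNReal.ofReal_lt_top)]
  simp_rw [ENNReal.toReal_ofReal (sq_nonneg _), real_smul, mul_comm]

lemma memLp_conj_realP (ht : |t| < 1) (hτ : ∀ r, |τ r| < 1) (hlam : Dominant lam) :
    MemLp (fun ξ => conj (realP t τ lam ξ)) 2 (weightMeasure n t τ) := by
  have hmeas : Measurable fun ξ => conj (realP t τ lam ξ) :=
    continuous_conj.measurable.comp (measurable_realP t τ lam)
  rw [memLp_two_iff_integrable_sq_norm hmeas.aestronglyMeasurable, weightMeasure_eq,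
    integrable_withDensity_iff (measurable_ofReal_norm_realDlt_sq t τ)
      (.of_forall fun _ => ENNReal.ofReal_lt_top)]
  simpa only [RCLike.norm_conj, ENNReal.toReal_ofReal (sq_nonneg _), norm_mul, mul_pow] using
    integrable_norm_realP_mul_realDlt_sq ht hτ hlam

lemma inner_toLp_conj {α : Type*} [MeasurableSpace α] {μ : Measure α} {g : α → ℂ}
    (hg : MemLp (fun x => conj (g x)) 2 μ) (F : Lp ℂ 2 μ) :
    inner ℂ (hg.toLp _) F = ∫ x, F x * g x ∂μ := by
  rw [L2.inner_def]
  refine integral_congr_ae ?_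
  filter_upwards [hg.coeFn_toLp] with x hx
  rw [hx, RCLike.inner_apply, conj_conj]

lemma inner_toLp_conj_realP
    (hlam : MemLp (fun ξ => conj (realP t τ lam ξ)) 2 (weightMeasure n t τ))
    (hmu : MemLp (fun ξ => conj (realP t τ mu ξ)) 2 (weightMeasure n t τ)) :
    inner ℂ (hlam.toLp _) (hmu.toLp _) =
      ∫ ξ in box n, conj (realP t τ mu ξ) * realP t τ lam ξ * (‖realDlt t τ ξ‖ ^ 2 : ℝ) := by
  rw [inner_toLp_conj,
    ← integral_weightMeasure t τ fun ξ => conj (realP t τ mu ξ) * realP t τ lam ξ]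
  exact integral_congr_ae (hmu.coeFn_toLp.mono fun ξ hξ =>
    congrArg (· * realP t τ lam ξ) hξ)

lemma inner_toLp_conj_realP_eq_zero (ht : |t| < 1) (hτ : ∀ r, |τ r| < 1) (hlam : Dominant lam)
    (hmu : Dominant mu) (hne : lam ≠ mu) :
    inner ℂ ((memLp_conj_realP ht hτ hlam).toLp _) ((memLp_conj_realP ht hτ hmu).toLp _) = 0 := by
  have hmeas : Measurable fun x => conj (hlSum t τ (posSupport mu) mu x) *
      hlSum t τ (posSupport lam) lam x * cWeight t τ univ x :=
    ((continuous_conj.measurable.comp (measurable_hlSum t τ _ mu)).mul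
      (measurable_hlSum t τ _ lam)).mul
      (measurable_ofReal.comp ((measurable_cFun t τ univ).norm.pow_const 2).inv)
  simp_rw [inner_toLp_conj_realP, conj_realP_mul_realP_mul_norm_realDlt_sq]
  rw [integral_const_mul, ← integral_map measurePreserving_toTorus.aemeasurable
      hmeas.aestronglyMeasurable, measurePreserving_toTorus.map_eq,
    integral_conj_hlSum_mul_hlSum_eq_zero ht hτ hmu hlam hne.symm, mul_zero]

lemma norm_toLp_conj_realP_sq
    (hlam : MemLp (fun ξ => conj (realP t τ lam ξ)) 2 (weightMeasure n t τ)) :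
    ‖hlam.toLp _‖ ^ 2 = nInt n t (τ 0) (τ 1) (τ 2) (τ 3) lam := by
  have hself := inner_toLp_conj_realP hlam hlam
  simp_rw [← ofReal_norm_realP_mul_realDlt_sq] at hself
  rw [inner_self_eq_norm_sq_to_K, integral_complex_ofReal, ← RCLike.ofReal_pow] at hself
  exact ofReal_injective hself

end WeightedL2

/-- Fourier inversion / completeness of the hyperoctahedral
Hall-Littlewood functions. -/
theorem fourier_inversion (n : ℕ) (hn : 1 ≤ n) (t t0 t1 t2 t3 : ℝ)
    (ht : t ∈ Set.Ioo (-1 : ℝ) 1) (htz : t ≠ 0)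
    (h0 : t0 ∈ Set.Ioo (-1 : ℝ) 1) (h0z : t0 ≠ 0)
    (h1 : t1 ∈ Set.Ioo (-1 : ℝ) 1) (h1z : t1 ≠ 0)
    (h2 : t2 ∈ Set.Ioo (-1 : ℝ) 1) (h2z : t2 ≠ 0)
    (h3 : t3 ∈ Set.Ioo (-1 : ℝ) 1) (h3z : t3 ≠ 0) :
    (∀ lam : Lam n,
      Integrable (fun xi : Fin n → ℝ =>
          (norm (P n (t : ℂ) (t0 : ℂ) (t1 : ℂ) (t2 : ℂ) (t3 : ℂ) lam.1
              (fun j => (xi j : ℂ)) *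
            Dlt n (t : ℂ) (t0 : ℂ) (t1 : ℂ) (t2 : ℂ) (t3 : ℂ) (fun j => (xi j : ℂ)))) ^ 2)
        ((volume : Measure (Fin n → ℝ)).restrict (box n)) ∧
      0 < nInt n t t0 t1 t2 t3 lam.1) ∧
    ∀ f : Lam n → ℂ,
      Summable (fun lam : Lam n => ‖f lam‖ ^ 2 * (nInt n t t0 t1 t2 t3 lam.1)⁻¹) →
      ∃ (hmem : ∀ lam : Lam n,
          MemLp (fun xi : Fin n → ℝ =>
              (starRingEnd ℂ) (P n (t : ℂ) (t0 : ℂ) (t1 : ℂ) (t2 : ℂ) (t3 : ℂ) lam.1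
                (fun j => (xi j : ℂ))))
            2 (wmeas n t t0 t1 t2 t3))
        (fhat : Lp ℂ 2 (wmeas n t t0 t1 t2 t3)),
        HasSum (fun lam : Lam n =>
          (f lam * (((nInt n t t0 t1 t2 t3 lam.1)⁻¹ : ℝ) : ℂ)) • (hmem lam).toLp _) fhat ∧
        ∀ lam : Lam n, f lam =
          ∫ xi, (fhat : (Fin n → ℝ) → ℂ) xi *
            P n (t : ℂ) (t0 : ℂ) (t1 : ℂ) (t2 : ℂ) (t3 : ℂ) lam.1 (fun j => (xi j : ℂ))
            ∂(wmeas n t t0 t1 t2 t3) := by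
  obtain ⟨τ, rfl, rfl, rfl, rfl⟩ : ∃ τ : Fin 4 → ℝ, τ 0 = t0 ∧ τ 1 = t1 ∧ τ 2 = t2 ∧ τ 3 = t3 :=
    ⟨![t0, t1, t2, t3], rfl, rfl, rfl, rfl⟩
  have htabs : |t| < 1 := abs_lt.mpr ht
  have hτ (r : Fin 4) : |τ r| < 1 := by
    fin_cases r
    exacts [abs_lt.mpr h0, abs_lt.mpr h1, abs_lt.mpr h2, abs_lt.mpr h3]
  have hdom (lam : Lam n) : Dominant lam.1 := ⟨fun i j hij => lam.2.1 i j hij, lam.2.2⟩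
  have hpos (lam : Lam n) : 0 < nInt n t (τ 0) (τ 1) (τ 2) (τ 3) lam.1 :=
    nInt_pos htabs htz hτ h0z (hdom lam)
  refine ⟨fun lam => ⟨integrable_norm_realP_mul_realDlt_sq htabs hτ (hdom lam), hpos lam⟩,
    fun f hf => ?_⟩
  have hmem (lam : Lam n) := memLp_conj_realP htabs hτ (hdom lam)
  have hnorm (lam : Lam n) : ‖(hmem lam).toLp _‖ ^ 2 = nInt n t (τ 0) (τ 1) (τ 2) (τ 3) lam.1 :=
    norm_toLp_conj_realP_sq (hmem lam)
  have horth : Pairwise fun lam mu : Lam n =>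
      inner ℂ ((hmem lam).toLp _) ((hmem mu).toLp _) = 0 := fun lam mu hne =>
    inner_toLp_conj_realP_eq_zero htabs hτ (hdom lam) (hdom mu) (Subtype.coe_injective.ne hne)
  have hne (lam : Lam n) : (hmem lam).toLp _ ≠ 0 := fun h => by
    simpa [h, (hpos lam).ne] using hnorm lam
  simp_rw [← hnorm] at hf
  obtain ⟨fhat, hsum, hinner⟩ := exists_hasSum_smul_and_inner_eq horth hne hf
  simp_rw [hnorm] at hsum
  exact ⟨hmem, fhat, hsum, fun lam => (hinner lam).symm.trans (inner_toLp_conj (hmem lam) fhat)⟩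

end QB

end
end
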